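/- arXiv:1803.06968 — 5 statements merged into one kernel-verified Lean document; each statement's English description precedes it below -/
import Mathlib

section
/- Let d ≥ 2 and let α_1, …, α_{d−1} ∈ ℝ. Let L_1, …, L_{d−1} be linearly independent linear forms of d−1 variables with real coefficients, and suppose there exist constants C > 0 and γ < 1 such that for every n ∈ ℤ^{d−1}, n ≠ 0, ‖α_1 n_1 + ⋯ + α_{d−1} n_{d−1}‖ · ∏_{k=1}^{d−1} (|L_k(n)| + 1) ≥ C |n|^{−γ}. Then the series Σ_{n ∈ ℤ^{d−1}, n ≠ 0} 1/(|n| · ∏_{k=1}^{d−1} (|L_k(n)| + 1) · ‖α_1 n_1 + ⋯ + α_{d−1} n_{d−1}‖) converges. -/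
open Real

/-- Distance from a real number to the nearest integer. -/
noncomputable def nint (x : ℝ) : ℝ := |x - round x|

/-- Euclidean norm of an integer vector. -/
noncomputable def znorm {m : ℕ} (n : Fin m → ℤ) : ℝ := Real.sqrt (∑ i, ((n i : ℝ)) ^ 2)

/-!
Sort the nonzero integer vectors into dyadic boxes according to the sizes of the `|L_k(n)| + 1`.
The difference of two points of one box has forms of at most comparable size, so the Diophantine
condition bounds below not only `‖α · n‖` on the box but also `‖α · (n - n')‖`: the numbers `α · n`
are separated modulo `1` by some gap `δ`. Their distances to `ℤ` are therefore at least of the order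
of `δ, 2δ, 3δ, …`, and since these distances are at most `1`, the sum of their reciprocals is
`O(δ ^ (-(1 + ε)))` for every `ε > 0`. As the exponent of `|n|` in the series exceeds `γ`, for small
`ε` the resulting bounds decay geometrically over the boxes.
-/

section Summability

theorem summable_of_sum_fiber_le {ι κ : Type*} {f : ι → ℝ} {g : κ → ℝ} (φ : ι → κ)
    (hf : ∀ x, 0 ≤ f x) (hg : Summable g)
    (h : ∀ (a : κ) (S : Finset ι), (∀ x ∈ S, φ x = a) → ∑ x ∈ S, f x ≤ g a) :
    Summable f := by
  classical
  have hg_nonneg : ∀ a, 0 ≤ g a := fun a => by simpa using h a ∅ (by simp)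
  refine summable_of_sum_le (c := ∑' a, g a) hf fun S => ?_
  calc ∑ x ∈ S, f x = ∑ a ∈ S.image φ, ∑ x ∈ S with φ x = a, f x :=
        (Finset.sum_fiberwise_of_maps_to (fun x hx => Finset.mem_image_of_mem φ hx) f).symm
    _ ≤ ∑ a ∈ S.image φ, g a :=
        Finset.sum_le_sum fun a _ => h a _ fun x hx => (Finset.mem_filter.1 hx).2
    _ ≤ ∑' a, g a := hg.sum_le_tsum _ fun a _ => hg_nonneg a

theorem summable_pi_prod {κ : Type*} [Fintype κ] {β : κ → Type*} {g : ∀ k, β k → ℝ}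
    (hg_nonneg : ∀ k b, 0 ≤ g k b) (hg : ∀ k, Summable (g k)) :
    Summable fun a : ∀ k, β k => ∏ k, g k (a k) := by
  classical
  have hprod_nonneg : ∀ a : ∀ k, β k, 0 ≤ ∏ k, g k (a k) := fun a =>
    Finset.prod_nonneg fun k _ => hg_nonneg k (a k)
  refine summable_of_sum_le (c := ∏ k, ∑' b, g k b) hprod_nonneg fun S => ?_
  have hS : S ⊆ Fintype.piFinset fun k => S.image fun a => a k := fun a ha =>
    Fintype.mem_piFinset.2 fun k => Finset.mem_image_of_mem (fun a : ∀ k, β k => a k) ha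
  calc ∑ a ∈ S, ∏ k, g k (a k)
      ≤ ∑ a ∈ Fintype.piFinset fun k => S.image fun a => a k, ∏ k, g k (a k) :=
        Finset.sum_le_sum_of_subset_of_nonneg hS fun a _ _ => hprod_nonneg a
    _ = ∏ k, ∑ b ∈ S.image fun a => a k, g k b := (Finset.prod_univ_sum _ _).symm
    _ ≤ ∏ k, ∑' b, g k b :=
        Finset.prod_le_prod (fun k _ => Finset.sum_nonneg fun b _ => hg_nonneg k b)
          fun k _ => (hg k).sum_le_tsum _ fun b _ => hg_nonneg k b

end Summability

section SeparatedPoints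

theorem abs_floor_le_two_mul_abs {R : Type*} [Ring R] [LinearOrder R] [IsStrictOrderedRing R]
    [FloorRing R] {t : R} (ht : 1 ≤ |t|) : |(⌊t⌋ : R)| ≤ 2 * |t| := by
  have hfract : |t - ⌊t⌋| ≤ 1 := Int.abs_fract.trans_le (Int.fract_lt_one t).le
  calc |(⌊t⌋ : R)| ≤ |t| + |t - ⌊t⌋| := by simpa using abs_sub t (t - ⌊t⌋)
    _ ≤ 2 * |t| := two_mul |t| ▸ add_le_add_right (hfract.trans ht) _

theorem floor_ne_zero_of_one_le_abs {R : Type*} [Ring R] [LinearOrder R] [IsStrictOrderedRing R]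
    [FloorRing R] {t : R} (ht : 1 ≤ |t|) : ⌊t⌋ ≠ 0 := fun h => by
  obtain ⟨h_nonneg, h_lt⟩ := Int.floor_eq_zero_iff.1 h
  exact (abs_of_nonneg h_nonneg ▸ ht).not_gt h_lt

variable {ι : Type*} {S : Finset ι} {δ p : ℝ}

theorem sum_abs_rpow_neg_le_of_separated {v : ι → ℝ} (hp : 1 < p) (hδ : 0 < δ)
    (hfar : ∀ x ∈ S, δ ≤ |v x|) (hsep : ∀ x ∈ S, ∀ y ∈ S, x ≠ y → δ ≤ |v x - v y|) :
    ∑ x ∈ S, |v x| ^ (-p) ≤ (∑' k : ℤ, |(k : ℝ)| ^ (-p)) * (δ / 2) ^ (-p) := by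
  classical
  set q : ι → ℤ := fun x => ⌊v x / δ⌋
  have hinj : Set.InjOn q S := by
    intro x hx y hy hxy
    by_contra hne
    have hlt : |(v x - v y) / δ| < 1 := by
      rw [sub_div]
      exact Int.abs_sub_lt_one_of_floor_eq_floor hxy
    rw [abs_div, abs_of_pos hδ, div_lt_one hδ] at hlt
    exact (hsep x hx y hy hne).not_gt hlt
  have hterm : ∀ x ∈ S, |v x| ^ (-p) ≤ |(q x : ℝ)| ^ (-p) * (δ / 2) ^ (-p) := by
    intro x hx
    have hone : 1 ≤ |v x / δ| := by
      rw [abs_div, abs_of_pos hδ, one_le_div hδ]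
      exact hfar x hx
    have hq : 0 < |(q x : ℝ)| := abs_pos.2 (Int.cast_ne_zero.2 (floor_ne_zero_of_one_le_abs hone))
    have hle : |(q x : ℝ)| * (δ / 2) ≤ |v x| := by
      have := abs_floor_le_two_mul_abs hone
      rw [abs_div, abs_of_pos hδ, ← mul_div_assoc, le_div_iff₀ hδ] at this
      linarith
    rw [← mul_rpow hq.le (by positivity)]
    exact rpow_le_rpow_of_nonpos (by positivity) hle (by linarith)
  have hzeta : ∑ k ∈ S.image q, |(k : ℝ)| ^ (-p) ≤ ∑' k : ℤ, |(k : ℝ)| ^ (-p) :=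
    (summable_abs_int_rpow hp).sum_le_tsum _ fun k _ => by positivity
  calc ∑ x ∈ S, |v x| ^ (-p) ≤ ∑ x ∈ S, |(q x : ℝ)| ^ (-p) * (δ / 2) ^ (-p) :=
        Finset.sum_le_sum hterm
    _ = (∑ k ∈ S.image q, |(k : ℝ)| ^ (-p)) * (δ / 2) ^ (-p) := by
        rw [Finset.sum_image hinj, Finset.sum_mul]
    _ ≤ (∑' k : ℤ, |(k : ℝ)| ^ (-p)) * (δ / 2) ^ (-p) := by gcongr

theorem nint_nonneg (x : ℝ) : 0 ≤ nint x := abs_nonneg _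

theorem nint_le_one (x : ℝ) : nint x ≤ 1 := (abs_sub_round x).trans (by norm_num)

theorem nint_sub_le_abs_sub_round_sub (x y : ℝ) :
    nint (x - y) ≤ |(x - round x) - (y - round y)| := by
  refine (round_le (x - y) (round x - round y)).trans_eq ?_
  push_cast
  congr 1
  ring

theorem sum_inv_nint_le_of_separated {f : ι → ℝ} (hp : 1 < p) (hδ : 0 < δ)
    (hfar : ∀ x ∈ S, δ ≤ nint (f x))
    (hsep : ∀ x ∈ S, ∀ y ∈ S, x ≠ y → δ ≤ nint (f x - f y)) :
    ∑ x ∈ S, (nint (f x))⁻¹ ≤ (∑' k : ℤ, |(k : ℝ)| ^ (-p)) * (δ / 2) ^ (-p) := by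
  have hterm : ∀ x ∈ S, (nint (f x))⁻¹ ≤ |f x - round (f x)| ^ (-p) := fun x hx => by
    rw [← rpow_neg_one]
    exact rpow_le_rpow_of_exponent_ge (hδ.trans_le (hfar x hx)) (nint_le_one _) (by linarith)
  exact (Finset.sum_le_sum hterm).trans <| sum_abs_rpow_neg_le_of_separated hp hδ hfar
    fun x hx y hy hxy => (hsep x hx y hy hxy).trans (nint_sub_le_abs_sub_round_sub _ _)

end SeparatedPoints

section DyadicBoxes

variable {κ : Type*} {a : κ → ℕ} {v w : κ → ℝ}

/-- The dyadic box with exponents `a`: the vectors `v` for which each `|v k| + 1` lies in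
`[2 ^ a k, 2 ^ (a k + 1))`. Because of the summand `1`, the boxes with natural exponents cover the
whole space. -/
def dyadicBox (a : κ → ℕ) : Set (κ → ℝ) :=
  {v | ∀ k, 2 ^ a k ≤ |v k| + 1 ∧ |v k| + 1 < 2 ^ (a k + 1)}

theorem exists_mem_dyadicBox (v : κ → ℝ) : ∃ a, v ∈ dyadicBox a := by
  choose a ha using fun k =>
    exists_nat_pow_near (le_add_of_nonneg_left (abs_nonneg (v k))) one_lt_two
  exact ⟨a, ha⟩

theorem abs_add_one_le_of_mem_dyadicBox (hv : v ∈ dyadicBox a) (k : κ) :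
    |v k| + 1 ≤ 4 * 2 ^ a k := by
  have hlt := (hv k).2
  rw [pow_succ] at hlt
  linarith [pow_pos (two_pos (α := ℝ)) (a k)]

theorem abs_sub_add_one_le_of_mem_dyadicBox (hv : v ∈ dyadicBox a) (hw : w ∈ dyadicBox a) (k : κ) :
    |(v - w) k| + 1 ≤ 4 * 2 ^ a k := by
  have hv_lt := (hv k).2
  have hw_lt := (hw k).2
  rw [pow_succ] at hv_lt hw_lt
  rw [Pi.sub_apply]
  linarith [abs_sub (v k) (w k)]

variable [Fintype κ]

theorem prod_two_pow_le_of_mem_dyadicBox (hv : v ∈ dyadicBox a) :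
    ∏ k, (2 : ℝ) ^ a k ≤ ∏ k, (|v k| + 1) :=
  Finset.prod_le_prod (fun _ _ => by positivity) fun k _ => (hv k).1

theorem two_pow_sup_le_of_mem_dyadicBox (hv : v ∈ dyadicBox a) :
    (2 : ℝ) ^ Finset.univ.sup a ≤ ‖v‖ + 1 :=
  Finset.sup_induction (p := fun j => (2 : ℝ) ^ j ≤ ‖v‖ + 1)
    (by simp)
    (fun i hi j hj => (max_choice i j).elim (fun h => by rwa [h]) (fun h => by rwa [h]))
    fun k _ => (hv k).1.trans (add_le_add_left (norm_le_pi_norm v k) 1)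

theorem norm_add_one_le_of_abs_add_one_le (h : ∀ k, |v k| + 1 ≤ 4 * 2 ^ a k) :
    ‖v‖ + 1 ≤ 4 * 2 ^ Finset.univ.sup a := by
  rw [← le_sub_iff_add_le, pi_norm_le_iff_of_nonneg
    (by linarith [one_le_pow₀ (one_le_two (α := ℝ)) (n := Finset.univ.sup a)])]
  intro k
  have hmono : (2 : ℝ) ^ a k ≤ 2 ^ Finset.univ.sup a :=
    pow_le_pow_right₀ one_le_two (Finset.le_sup (Finset.mem_univ k))
  rw [norm_eq_abs]
  linarith [h k]

theorem sum_le_card_mul_sup (a : κ → ℕ) : ∑ k, a k ≤ Fintype.card κ * Finset.univ.sup a :=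
  Finset.sum_le_card_nsmul _ _ _ fun k _ => Finset.le_sup (Finset.mem_univ k)

variable {c γ ε σ : ℝ}

/-- The gap of the dyadic box with exponents `a`: the lower bound that the condition
`c * (‖v‖ + 1) ^ (-γ) ≤ t * ∏ k, (|v k| + 1)` gives for `t`, when `v` lies in the box or is a
difference of two of its points. The constants `4` allow for the passage to differences. -/
noncomputable def boxGap (c γ : ℝ) (a : κ → ℕ) : ℝ :=
  c * (4 * 2 ^ Finset.univ.sup a) ^ (-γ) / ∏ k, (4 * 2 ^ a k)

theorem boxGap_pos (hc : 0 < c) : 0 < boxGap c γ a := by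
  have : 0 < ∏ k, (4 * 2 ^ a k : ℝ) := Finset.prod_pos fun _ _ => by positivity
  unfold boxGap
  positivity

theorem boxGap_eq (c γ : ℝ) (a : κ → ℕ) :
    boxGap c γ a = c * 4 ^ (-γ) / 4 ^ Fintype.card κ *
      2 ^ (-((∑ k, a k : ℕ) + γ * (Finset.univ.sup a : ℕ)) : ℝ) := by
  have hj : ((2 : ℝ) ^ Finset.univ.sup a) ^ (-γ) = 2 ^ (-(γ * (Finset.univ.sup a : ℕ))) := by
    rw [← rpow_natCast, ← rpow_mul zero_le_two]
    ring_nf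
  rw [boxGap, Finset.prod_mul_distrib, Finset.prod_pow_eq_pow_sum, Finset.prod_const,
    Finset.card_univ, mul_rpow (by positivity) (by positivity), hj, neg_add, rpow_add two_pos,
    rpow_neg zero_le_two (∑ k, a k : ℕ), rpow_natCast]
  field_simp

theorem boxGap_le {t : ℝ} (hc : 0 < c) (hγ : 0 ≤ γ) (ht : 0 ≤ t)
    (hv : ∀ k, |v k| + 1 ≤ 4 * 2 ^ a k)
    (h : c * (‖v‖ + 1) ^ (-γ) ≤ t * ∏ k, (|v k| + 1)) : boxGap c γ a ≤ t := by
  rw [boxGap, div_le_iff₀ (Finset.prod_pos fun _ _ => by positivity)]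
  calc c * (4 * 2 ^ Finset.univ.sup a) ^ (-γ) ≤ c * (‖v‖ + 1) ^ (-γ) := by
        refine mul_le_mul_of_nonneg_left ?_ hc.le
        exact rpow_le_rpow_of_nonpos (by positivity) (norm_add_one_le_of_abs_add_one_le hv)
          (neg_nonpos.2 hγ)
    _ ≤ t * ∏ k, (|v k| + 1) := h
    _ ≤ t * ∏ k, (4 * 2 ^ a k) :=
        mul_le_mul_of_nonneg_left
          (Finset.prod_le_prod (fun _ _ => by positivity) fun k _ => hv k) ht

theorem boxGap_rpow_div_le (hc : 0 < c) (hε : 0 ≤ ε)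
    (hεσ : ε * (2 * Fintype.card κ + γ) ≤ σ - γ) :
    (boxGap c γ a / 2) ^ (-(1 + ε)) / ((2 ^ Finset.univ.sup a) ^ σ * ∏ k, 2 ^ a k) ≤
      (c * 4 ^ (-γ) / 4 ^ Fintype.card κ / 2) ^ (-(1 + ε)) * ∏ k, ((2 : ℝ) ^ (-ε)) ^ a k := by
  have hsum : ((∑ k, a k : ℕ) : ℝ) ≤ Fintype.card κ * (Finset.univ.sup a : ℕ) :=
    mod_cast sum_le_card_mul_sup a
  rw [boxGap_eq, Finset.prod_pow_eq_pow_sum, Finset.prod_pow_eq_pow_sum]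
  generalize Finset.univ.sup a = j at hsum ⊢
  generalize ∑ k, a k = s at hsum ⊢
  -- One `ε * s` is lost in summing over the box, a second one is kept for the decay over the boxes;
  -- both are at most `ε * card κ * j`, which `(σ - γ) * j` absorbs.
  have hexponent : (-(s + γ * j)) * (-(1 + ε)) - (j * σ + s) ≤ -ε * s := by
    have hs := mul_le_mul_of_nonneg_left hsum hε
    have hj := mul_le_mul_of_nonneg_right hεσ (Nat.cast_nonneg (α := ℝ) j)
    linarith
  calc _ = (c * 4 ^ (-γ) / 4 ^ Fintype.card κ / 2) ^ (-(1 + ε)) *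
        2 ^ ((-(s + γ * j)) * (-(1 + ε)) - (j * σ + s)) := by
        rw [mul_div_right_comm, mul_rpow (by positivity) (by positivity), ← rpow_mul zero_le_two,
          rpow_sub two_pos, rpow_add two_pos, rpow_mul zero_le_two j, rpow_natCast, rpow_natCast,
          mul_div_assoc]
    _ ≤ (c * 4 ^ (-γ) / 4 ^ Fintype.card κ / 2) ^ (-(1 + ε)) * 2 ^ (-ε * s) :=
        mul_le_mul_of_nonneg_left (rpow_le_rpow_of_exponent_le one_le_two hexponent)
          (by positivity)
    _ = _ := by rw [rpow_mul zero_le_two, rpow_natCast]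

end DyadicBoxes

section AdditiveMaps

variable {Λ κ : Type*} [AddCommGroup Λ] [Fintype κ] {θ : Λ →+ ℝ} {ℓ : Λ →+ κ → ℝ} {c γ ε σ : ℝ}

theorem sum_inv_nint_le_of_mem_dyadicBox {p : ℝ} (hp : 1 < p) (hc : 0 < c) (hγ : 0 ≤ γ)
    (hbound : ∀ n, n ≠ 0 → c * (‖ℓ n‖ + 1) ^ (-γ) ≤ nint (θ n) * ∏ k, (|ℓ n k| + 1))
    {a : κ → ℕ} {S : Finset {n : Λ // n ≠ 0}} (hS : ∀ n ∈ S, ℓ n ∈ dyadicBox a) :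
    ∑ n ∈ S, (nint (θ n))⁻¹ ≤ (∑' k : ℤ, |(k : ℝ)| ^ (-p)) * (boxGap c γ a / 2) ^ (-p) := by
  have hgap : ∀ n, n ≠ 0 → (∀ k, |ℓ n k| + 1 ≤ 4 * 2 ^ a k) → boxGap c γ a ≤ nint (θ n) :=
    fun n hn hbox => boxGap_le hc hγ (nint_nonneg _) hbox (hbound n hn)
  refine sum_inv_nint_le_of_separated hp (boxGap_pos hc)
    (fun n hn => hgap n n.2 (abs_add_one_le_of_mem_dyadicBox (hS n hn))) fun x hx y hy hxy => ?_
  rw [← map_sub]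
  refine hgap _ (sub_ne_zero.2 (Subtype.coe_ne_coe.2 hxy)) ?_
  rw [map_sub]
  exact abs_sub_add_one_le_of_mem_dyadicBox (hS x hx) (hS y hy)

theorem sum_dyadicBox_le (hε : 0 < ε) (hεσ : ε * (2 * Fintype.card κ + γ) ≤ σ - γ) (hc : 0 < c)
    (hγ : 0 ≤ γ)
    (hbound : ∀ n, n ≠ 0 → c * (‖ℓ n‖ + 1) ^ (-γ) ≤ nint (θ n) * ∏ k, (|ℓ n k| + 1))
    {a : κ → ℕ} {S : Finset {n : Λ // n ≠ 0}} (hS : ∀ n ∈ S, ℓ n ∈ dyadicBox a) :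
    ∑ n ∈ S, 1 / ((‖ℓ n‖ + 1) ^ σ * (∏ k, (|ℓ n k| + 1)) * nint (θ n)) ≤
      (∑' k : ℤ, |(k : ℝ)| ^ (-(1 + ε))) *
        (c * 4 ^ (-γ) / 4 ^ Fintype.card κ / 2) ^ (-(1 + ε)) * ∏ k, ((2 : ℝ) ^ (-ε)) ^ a k := by
  have hσ : 0 ≤ σ := by linarith [show 0 ≤ ε * (2 * Fintype.card κ + γ) by positivity]
  set ζ : ℝ := ∑' k : ℤ, |(k : ℝ)| ^ (-(1 + ε))
  have hζ : 0 ≤ ζ := tsum_nonneg fun k => by positivity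
  set weight : ℝ := (2 ^ Finset.univ.sup a) ^ σ * ∏ k, 2 ^ a k
  have hprod : 0 < ∏ k, (2 : ℝ) ^ a k := Finset.prod_pos fun _ _ => by positivity
  have hweight : 0 < weight := by positivity
  have hterm : ∀ n ∈ S, 1 / ((‖ℓ n‖ + 1) ^ σ * (∏ k, (|ℓ n k| + 1)) * nint (θ n)) ≤
      (nint (θ n))⁻¹ / weight := by
    intro n hn
    have hle : weight ≤ (‖ℓ n‖ + 1) ^ σ * ∏ k, (|ℓ n k| + 1) := by
      refine mul_le_mul ?_ (prod_two_pow_le_of_mem_dyadicBox (hS n hn)) hprod.le (by positivity)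
      exact rpow_le_rpow (by positivity) (two_pow_sup_le_of_mem_dyadicBox (hS n hn)) hσ
    rw [one_div, mul_inv_rev, div_eq_mul_inv]
    exact mul_le_mul_of_nonneg_left (inv_anti₀ hweight hle) (inv_nonneg.2 (nint_nonneg _))
  calc ∑ n ∈ S, 1 / ((‖ℓ n‖ + 1) ^ σ * (∏ k, (|ℓ n k| + 1)) * nint (θ n))
      ≤ (∑ n ∈ S, (nint (θ n))⁻¹) / weight :=
        (Finset.sum_le_sum hterm).trans_eq (Finset.sum_div _ _ _).symm
    _ ≤ ζ * (boxGap c γ a / 2) ^ (-(1 + ε)) / weight :=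
        div_le_div_of_nonneg_right
          (sum_inv_nint_le_of_mem_dyadicBox (by linarith) hc hγ hbound hS) hweight.le
    _ = ζ * ((boxGap c γ a / 2) ^ (-(1 + ε)) / weight) := mul_div_assoc _ _ _
    _ ≤ _ := by
        rw [mul_assoc]
        exact mul_le_mul_of_nonneg_left (boxGap_rpow_div_le hc hε.le hεσ) hζ

theorem summable_one_div_of_le_nint_mul_prod (hc : 0 < c) (hγ : 0 ≤ γ) (hγσ : γ < σ)
    (hbound : ∀ n, n ≠ 0 → c * (‖ℓ n‖ + 1) ^ (-γ) ≤ nint (θ n) * ∏ k, (|ℓ n k| + 1)) :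
    Summable fun n : {n : Λ // n ≠ 0} =>
      1 / ((‖ℓ n‖ + 1) ^ σ * (∏ k, (|ℓ n k| + 1)) * nint (θ n)) := by
  obtain ⟨ε, hε, hεσ⟩ : ∃ ε : ℝ, 0 < ε ∧ ε * (2 * Fintype.card κ + γ) ≤ σ - γ := by
    refine ⟨(σ - γ) / (2 * Fintype.card κ + γ + 1), div_pos (by linarith) (by positivity), ?_⟩
    rw [div_mul_eq_mul_div, div_le_iff₀ (by positivity)]
    exact mul_le_mul_of_nonneg_left (by linarith) (by linarith)
  have hratio : (2 : ℝ) ^ (-ε) < 1 := rpow_lt_one_of_one_lt_of_neg one_lt_two (by linarith)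
  have hgeometric : Summable fun a : κ → ℕ => ∏ k, ((2 : ℝ) ^ (-ε)) ^ a k :=
    summable_pi_prod (fun _ _ => by positivity)
      fun _ => summable_geometric_of_lt_one (by positivity) hratio
  choose φ hφ using fun n : {n : Λ // n ≠ 0} => exists_mem_dyadicBox (ℓ n)
  refine summable_of_sum_fiber_le φ (fun n => ?_) (hgeometric.mul_left _) fun a S hS =>
    sum_dyadicBox_le hε hεσ hc hγ hbound fun n hn => hS n hn ▸ hφ n
  have := nint_nonneg (θ n)
  positivity

end AdditiveMaps

section RpowComparison

theorem mul_rpow_neg_max_zero_le {x y K C γ : ℝ} (hC : 0 ≤ C) (hx : 1 ≤ x) (hy : 0 < y)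
    (hxy : x ≤ K * y) :
    C * K ^ (-max γ 0) * y ^ (-max γ 0) ≤ C * x ^ (-γ) := by
  have hK : 0 < K := pos_of_mul_pos_left (one_pos.trans_le (hx.trans hxy)) hy.le
  rw [mul_assoc, ← mul_rpow hK.le hy.le]
  refine mul_le_mul_of_nonneg_left ?_ hC
  calc (K * y) ^ (-max γ 0) ≤ x ^ (-max γ 0) :=
        rpow_le_rpow_of_nonpos (one_pos.trans_le hx) hxy (neg_nonpos.2 (le_max_right _ _))
    _ ≤ x ^ (-γ) := rpow_le_rpow_of_exponent_le hx (neg_le_neg (le_max_left _ _))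

theorem one_div_rpow_mul_mul_le {x y K σ P t : ℝ} (hσ : 0 ≤ σ) (hx : 0 < x) (hy : 0 < y)
    (hxy : x ≤ K * y) (hP : 0 ≤ P) (ht : 0 ≤ t) :
    1 / (y ^ σ * P * t) ≤ K ^ σ * (1 / (x ^ σ * P * t)) := by
  have hK : 0 < K := pos_of_mul_pos_left (hx.trans_le hxy) hy.le
  have hpow : (y ^ σ)⁻¹ ≤ K ^ σ * (x ^ σ)⁻¹ := by
    rw [← div_eq_mul_inv, le_div_iff₀ (by positivity), inv_mul_le_iff₀ (by positivity), mul_comm,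
      ← mul_rpow hK.le hy.le]
    exact rpow_le_rpow hx.le hxy hσ
  calc 1 / (y ^ σ * P * t) = (y ^ σ)⁻¹ * (P * t)⁻¹ := by rw [one_div, mul_assoc, mul_inv]
    _ ≤ K ^ σ * (x ^ σ)⁻¹ * (P * t)⁻¹ := by gcongr
    _ = K ^ σ * (1 / (x ^ σ * P * t)) := by rw [one_div, mul_assoc, mul_assoc, ← mul_inv]

end RpowComparison

section LinearForms

variable {m : ℕ} {κ : Type*}

/-- The linear form with coefficients `b`, as an additive map on integer vectors. -/
def intLinearForm (b : Fin m → ℝ) : (Fin m → ℤ) →+ ℝ :=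
  AddMonoidHom.mk' (fun n => ∑ i, b i * (n i : ℝ)) fun x y => by
    simp only [Pi.add_apply, Int.cast_add, mul_add, Finset.sum_add_distrib]

/-- The linear forms with coefficient vectors `L k`, jointly as an additive map on integer vectors.
The norm of its values is the sup norm. -/
def intLinearForms (L : κ → Fin m → ℝ) : (Fin m → ℤ) →+ κ → ℝ :=
  AddMonoidHom.pi fun k => intLinearForm (L k)

theorem znorm_eq_norm_toLp (n : Fin m → ℤ) :
    znorm n = ‖(WithLp.toLp 2 fun i => (n i : ℝ) : EuclideanSpace ℝ (Fin m))‖ := by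
  simp only [znorm, EuclideanSpace.norm_eq, norm_eq_abs, sq_abs]

theorem one_le_znorm {n : Fin m → ℤ} (hn : n ≠ 0) : 1 ≤ znorm n := by
  obtain ⟨i, hi⟩ := Function.ne_iff.1 hn
  calc (1 : ℝ) ≤ |(n i : ℝ)| := mod_cast Int.one_le_abs hi
    _ ≤ znorm n := znorm_eq_norm_toLp n ▸ PiLp.norm_apply_le (WithLp.toLp 2 fun i => (n i : ℝ)) i

theorem mulVecLin_injective_of_span_eq_top {R ι κ : Type*} [CommRing R] [Fintype ι]
    {L : κ → ι → R} (hL : Submodule.span R (Set.range L) = ⊤) :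
    Function.Injective (Matrix.of L).mulVecLin := by
  rw [← LinearMap.ker_eq_bot, LinearMap.ker_eq_bot']
  intro x hx
  have hrow : ∀ w, w ⬝ᵥ x = 0 := fun w => by
    have hw : w ∈ Submodule.span R (Set.range L) := hL ▸ Submodule.mem_top
    induction hw using Submodule.span_induction with
    | mem w hw =>
      obtain ⟨k, rfl⟩ := hw
      exact congrFun hx k
    | zero => exact zero_dotProduct x
    | add u w _ _ hu hw => rw [add_dotProduct, hu, hw, add_zero]
    | smul r w _ hw => rw [smul_dotProduct, hw, smul_zero]
  exact dotProduct_eq_zero x fun w => dotProduct_comm x w ▸ hrow w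

variable [Fintype κ]

theorem exists_norm_intLinearForms_add_one_le (L : κ → Fin m → ℝ) :
    ∃ K : ℝ, ∀ n, n ≠ 0 → ‖intLinearForms L n‖ + 1 ≤ K * znorm n := by
  let T := (Matrix.of L).mulVecLin ∘ₗ (WithLp.linearEquiv 2 ℝ (Fin m → ℝ)).toLinearMap
  refine ⟨‖T.toContinuousLinearMap‖ + 1, fun n hn => ?_⟩
  have hT : ‖intLinearForms L n‖ ≤ ‖T.toContinuousLinearMap‖ * znorm n := by
    rw [znorm_eq_norm_toLp]
    exact T.toContinuousLinearMap.le_opNorm (WithLp.toLp 2 fun i => (n i : ℝ))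
  linarith [one_le_znorm hn]

theorem exists_znorm_le_norm_intLinearForms {L : κ → Fin m → ℝ}
    (hL : Submodule.span ℝ (Set.range L) = ⊤) :
    ∃ K : ℝ, 0 < K ∧ ∀ n, znorm n ≤ K * ‖intLinearForms L n‖ := by
  let T := (Matrix.of L).mulVecLin ∘ₗ (WithLp.linearEquiv 2 ℝ (Fin m → ℝ)).toLinearMap
  have hT : LinearMap.ker T = ⊥ := LinearMap.ker_eq_bot.2
    ((mulVecLin_injective_of_span_eq_top hL).comp (LinearEquiv.injective _))
  obtain ⟨K, hK, hlip⟩ := T.exists_antilipschitzWith hT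
  refine ⟨K, hK, fun n => ?_⟩
  rw [znorm_eq_norm_toLp]
  exact ZeroHomClass.bound_of_antilipschitz T hlip (WithLp.toLp 2 fun i => (n i : ℝ))

end LinearForms

theorem series_convergence_of_diophantine_bound_general {m : ℕ} {κ : Type*} [Fintype κ]
    (α : Fin m → ℝ) {L : κ → Fin m → ℝ} (hL : Submodule.span ℝ (Set.range L) = ⊤)
    {C γ σ : ℝ} (hC : 0 < C) (hσ : 0 < σ) (hγσ : γ < σ)
    (hbound : ∀ n : Fin m → ℤ, n ≠ 0 →
      C * znorm n ^ (-γ) ≤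
        nint (∑ i, α i * (n i : ℝ)) * ∏ k, (|∑ i, L k i * (n i : ℝ)| + 1)) :
    Summable (fun n : {n : Fin m → ℤ // n ≠ 0} =>
      1 / (znorm n.1 ^ σ * (∏ k, (|∑ i, L k i * (n.1 i : ℝ)| + 1)) *
        nint (∑ i, α i * (n.1 i : ℝ)))) := by
  obtain ⟨K₁, hle⟩ := exists_norm_intLinearForms_add_one_le L
  obtain ⟨K₂, hK₂, hge⟩ := exists_znorm_le_norm_intLinearForms hL
  have hbound' : ∀ n, n ≠ 0 → C * K₂ ^ (-max γ 0) * (‖intLinearForms L n‖ + 1) ^ (-max γ 0) ≤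
      nint (intLinearForm α n) * ∏ k, (|intLinearForms L n k| + 1) := fun n hn => by
    have hle_add_one : znorm n ≤ K₂ * (‖intLinearForms L n‖ + 1) := by linarith [hge n]
    exact (mul_rpow_neg_max_zero_le hC.le (one_le_znorm hn) (by positivity) hle_add_one).trans
      (hbound n hn)
  refine .of_nonneg_of_le (fun n => ?_) (fun n => ?_)
    ((summable_one_div_of_le_nint_mul_prod (by positivity) (le_max_right γ 0)
      (max_lt hγσ hσ) hbound').mul_left (K₁ ^ σ))
  · have := one_le_znorm n.2
    have := nint_nonneg (∑ i, α i * (n.1 i : ℝ))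
    positivity
  · exact one_div_rpow_mul_mul_le hσ.le (by positivity) (one_pos.trans_le (one_le_znorm n.2))
      (hle n n.2) (Finset.prod_nonneg fun _ _ => by positivity) (nint_nonneg _)

/-- If `‖α₁n₁+⋯+α_{d-1}n_{d-1}‖ · ∏ (|L_k(n)|+1) ≥ C|n|^{-γ}` for all `n ≠ 0`, with
`C > 0` and `γ < 1`, then the series
`∑_{n ≠ 0} 1/(|n| · ∏ (|L_k(n)|+1) · ‖α₁n₁+⋯+α_{d-1}n_{d-1}‖)` converges. -/
theorem series_convergence_of_diophantine_bound
    {d : ℕ} (hd : 2 ≤ d) (α : Fin (d - 1) → ℝ)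
    (L : Fin (d - 1) → Fin (d - 1) → ℝ) (hLind : LinearIndependent ℝ L)
    (C γ : ℝ) (hC : 0 < C) (hγ : γ < 1)
    (hbound : ∀ n : Fin (d - 1) → ℤ, n ≠ 0 →
      C * znorm n ^ (-γ) ≤
        nint (∑ i, α i * (n i : ℝ)) * ∏ k, (|∑ i, L k i * (n i : ℝ)| + 1)) :
    Summable (fun n : {n : Fin (d - 1) → ℤ // n ≠ 0} =>
      1 / (znorm n.1 * (∏ k, (|∑ i, L k i * (n.1 i : ℝ)| + 1)) *
        nint (∑ i, α i * (n.1 i : ℝ)))) := by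
  have hspan : Submodule.span ℝ (Set.range L) = ⊤ :=
    hLind.span_eq_top_of_card_eq_finrank' (by simp)
  simpa only [rpow_one] using
    series_convergence_of_diophantine_bound_general α hspan hC one_pos hγ hbound
end

section
/- Let d ≥ 2, let α ∈ ℝ^d with α_d = 1, and let P ⊆ [0,1]^d be a polytope with nonempty interior such that every facet of P has a normal vector ν with ⟨ν, α⟩ ≠ 0 (i.e., no facet of P is parallel to α). Then the function f : ℝ^{d−1} → ℝ defined by f(x_1, …, x_{d−1}) = ∫_0^1 χ_P({x_1 + tα_1}, …, {x_{d−1} + tα_{d−1}}, t) dt is continuous, and it is periodic modulo ℤ^{d−1}. -/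
open MeasureTheory Real

/-- The convex hull of finitely many points. -/
def IsPolytope {d : ℕ} (P : Set (Fin d → ℝ)) : Prop :=
  ∃ V : Finset (Fin d → ℝ), P = convexHull ℝ (V : Set (Fin d → ℝ))

/-- A facet of a polytope `P ⊆ ℝ^d`: a `(d-1)`-dimensional face of `P`. -/
def IsFacet {d : ℕ} (P F : Set (Fin d → ℝ)) : Prop :=
  IsExtreme ℝ P F ∧ Module.finrank ℝ (affineSpan ℝ F).direction = d - 1

/-- A normal vector of a facet: a nonzero vector orthogonal to the facet. -/
def IsNormalVec {d : ℕ} (F : Set (Fin d → ℝ)) (ν : Fin d → ℝ) : Prop :=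
  ν ≠ 0 ∧ ∀ x ∈ F, ∀ y ∈ F, (∑ i, ν i * (x i - y i)) = 0

/-- `f(x₁,…,x_{d-1}) = ∫_0^1 χ_P({x₁+tα₁},…,{x_{d-1}+tα_{d-1}}, t) dt`. -/
noncomputable def fFun {d : ℕ} (α : Fin d → ℝ) (P : Set (Fin d → ℝ))
    (x : Fin (d - 1) → ℝ) : ℝ :=
  ∫ t in (0:ℝ)..1, Set.indicator P (fun _ => (1:ℝ))
    (fun j : Fin d => if h : (j : ℕ) < d - 1 then Int.fract (x ⟨j, h⟩ + t * α j) else t)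

/-!
The integrand at time `t` is the indicator of the slice of `P` at height `t`, evaluated at the
fractional part of `x + tα'`, where `α'` denotes the first `d - 1` coordinates of `α`. As `P` lies
in the unit cube, it can be discontinuous in `x` only if some integer translate of `(x + tα', t)`
lies on the frontier of `P`. For fixed `x` these translates run along countably many lines of
direction `α`, so by dominated convergence `f` is continuous as soon as each such line meets the
frontier in a null set. Every boundary point lies on a facet; as the facet is transverse to `α`, its
supporting functional is strictly monotone along the line, which therefore leaves `P` there. Hence
the line meets the frontier only in the endpoints of its intersection with `P`.
-/

open scoped Topology

theorem exists_nonneg_mul_le_and_eq {ι 𝕜 : Type*} [Field 𝕜] [LinearOrder 𝕜]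
    [IsStrictOrderedRing 𝕜] {s : Finset ι} {f g : ι → 𝕜} (hf : ∀ i ∈ s, 0 ≤ f i)
    (hg : ∃ i ∈ s, 0 < g i) :
    ∃ c, 0 ≤ c ∧ (∀ i ∈ s, c * g i ≤ f i) ∧ ∃ i ∈ s, 0 < g i ∧ c * g i = f i := by
  obtain ⟨i₀, hi₀, hmin⟩ := (s.filter (0 < g ·)).exists_min_image (fun i => f i / g i)
    (hg.imp fun _ => Finset.mem_filter.2)
  obtain ⟨hi₀s, hgi₀⟩ := Finset.mem_filter.1 hi₀
  have hc : 0 ≤ f i₀ / g i₀ := div_nonneg (hf i₀ hi₀s) hgi₀.le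
  refine ⟨f i₀ / g i₀, hc, fun i hi => ?_, i₀, hi₀s, hgi₀, div_mul_cancel₀ _ hgi₀.ne'⟩
  rcases lt_or_ge 0 (g i) with hgi | hgi
  · exact (le_div_iff₀ hgi).1 (hmin i (Finset.mem_filter.2 ⟨hi, hgi⟩))
  · exact (mul_nonpos_of_nonneg_of_nonpos hc hgi).trans (hf i hi)

theorem vectorSpan_le_ker_of_forall_eq {R E M : Type*} [Ring R] [AddCommGroup E] [Module R E]
    [AddCommGroup M] [Module R M] {f : E →ₗ[R] M} {s : Set E}
    (h : ∀ x ∈ s, ∀ y ∈ s, f x = f y) : vectorSpan R s ≤ f.ker := by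
  rw [vectorSpan_def, Submodule.span_le]
  rintro _ ⟨x, hx, y, hy, rfl⟩
  simp [h x hx y hy]

section SupportingFunctionals

variable {E : Type*} [AddCommGroup E] [Module ℝ E] [TopologicalSpace E]
  {s : Set E} {p q u y : E} {l : StrongDual ℝ E}

theorem apply_eq_of_mem_toExposed (hp : p ∈ l.toExposed s) (hq : q ∈ l.toExposed s) :
    l p = l q :=
  le_antisymm (hq.2 p hp.1) (hp.2 q hq.1)

theorem mem_toExposed_of_apply_eq (hp : p ∈ l.toExposed s) (hq : q ∈ s) (h : l q = l p) :
    q ∈ l.toExposed s :=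
  ⟨hq, fun x hx => (hp.2 x hx).trans_eq h.symm⟩

theorem mem_toExposed_convexHull (hp : p ∈ convexHull ℝ s) (h : ∀ x ∈ s, l x ≤ l p) :
    p ∈ l.toExposed (convexHull ℝ s) :=
  ⟨hp, fun _ hx => convexHull_min h (convex_halfSpace_le l.isLinear (l p)) hx⟩

theorem vectorSpan_toExposed_le_ker : vectorSpan ℝ (l.toExposed s) ≤ l.ker :=
  vectorSpan_le_ker_of_forall_eq fun _ hx _ hy => apply_eq_of_mem_toExposed hx hy

theorem exists_apply_lt_or_exists_lt_apply (hs : vectorSpan ℝ s = ⊤) (hl : l ≠ 0) (p : E) :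
    (∃ x ∈ s, l x < l p) ∨ ∃ x ∈ s, l p < l x := by
  by_contra! h
  have hconst : ∀ x ∈ s, l x = l p := fun x hx => le_antisymm (h.2 x hx) (h.1 x hx)
  have hker : vectorSpan ℝ s ≤ l.ker :=
    vectorSpan_le_ker_of_forall_eq fun x hx y hy => (hconst x hx).trans (hconst y hy).symm
  exact hl (ContinuousLinearMap.ext fun x => hker (hs ▸ Submodule.mem_top))

theorem exists_mem_toExposed_of_mem_diff_interior [IsTopologicalAddGroup E] [ContinuousSMul ℝ E]
    (hs : Convex ℝ s) (hint : (interior s).Nonempty) (hp : p ∈ s \ interior s) :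
    ∃ l : StrongDual ℝ E, l ≠ 0 ∧ p ∈ l.toExposed s :=
  (geometric_hahn_banach_of_nonempty_interior_point hs hp.2 hint).imp
    fun _ hl => ⟨hl.1, hp.1, hl.2⟩

theorem apply_eq_zero_of_mem_toExposed_of_eventually_mem {t : ℝ}
    (ht : y + t • u ∈ l.toExposed s) (h : ∀ᶠ r in 𝓝 t, y + r • u ∈ s) : l u = 0 := by
  have hmax : IsLocalMax (fun r : ℝ => l y + r * l u) t := by
    filter_upwards [h] with r hr
    simpa using ht.2 _ hr
  have hderiv : HasDerivAt (fun r : ℝ => l y + r * l u) (l u) t := by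
    simpa using ((hasDerivAt_id t).mul_const (l u)).const_add (l y)
  exact hmax.hasDerivAt_eq_zero hderiv

theorem ae_add_smul_notMem_frontier (hs : Convex ℝ s) (hclosed : IsClosed s)
    (h : ∀ p ∈ frontier s, ∃ l : StrongDual ℝ E, p ∈ l.toExposed s ∧ l u ≠ 0) (y : E) :
    ∀ᵐ t : ℝ, y + t • u ∉ frontier s := by
  have hconv : Convex ℝ {t : ℝ | y + t • u ∈ s} :=
    (hs.translate_preimage_right y).is_linear_preimage (IsLinearMap.isLinearMap_smul' u)
  filter_upwards [measure_eq_zero_iff_ae_notMem.1 (hconv.addHaar_frontier volume)] with t ht hts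
  refine ht ⟨subset_closure (hclosed.frontier_subset hts), fun htint => ?_⟩
  obtain ⟨l, hl, hlu⟩ := h _ hts
  exact hlu (apply_eq_zero_of_mem_toExposed_of_eventually_mem hl
    (mem_interior_iff_mem_nhds.1 htint))

end SupportingFunctionals

section Facets

variable {E : Type*} [NormedAddCommGroup E] [NormedSpace ℝ E] [FiniteDimensional ℝ E]
  {s : Set E} {V : Finset E} {p : E} {l : StrongDual ℝ E}

theorem exists_le_ker_apply_ne_zero_apply_lt (hs : vectorSpan ℝ s = ⊤)
    {W : Submodule ℝ E} {w : E} (hw : w ∉ W) (p : E) :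
    ∃ n : StrongDual ℝ E, W ≤ n.ker ∧ n w ≠ 0 ∧ ∃ x ∈ s, n x < n p := by
  obtain ⟨m, hmw, hmW⟩ := W.exists_le_ker_of_notMem hw
  let n : StrongDual ℝ E := m.toContinuousLinearMap
  have hn : n ≠ 0 := fun h => hmw (DFunLike.congr_fun h w)
  rcases exists_apply_lt_or_exists_lt_apply hs hn p with hlt | hgt
  · exact ⟨n, hmW, hmw, hlt⟩
  · exact ⟨-n, fun x hx => neg_eq_zero.2 (hmW hx), neg_ne_zero.2 hmw, by simpa using hgt⟩

/- Tilt `l` by a multiple of a functional that is constant on its exposed face, until the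
supporting hyperplane hits a further vertex. -/
theorem exists_vectorSpan_toExposed_lt (hV : vectorSpan ℝ (V : Set E) = ⊤) (hl : l ≠ 0)
    (hp : p ∈ l.toExposed (convexHull ℝ (V : Set E)))
    (hker : vectorSpan ℝ (l.toExposed (convexHull ℝ (V : Set E))) ≠ l.ker) :
    ∃ l' : StrongDual ℝ E, l' ≠ 0 ∧ p ∈ l'.toExposed (convexHull ℝ (V : Set E)) ∧
      vectorSpan ℝ (l.toExposed (convexHull ℝ (V : Set E))) <
        vectorSpan ℝ (l'.toExposed (convexHull ℝ (V : Set E))) := by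
  set P := convexHull ℝ (V : Set E)
  have hVP : (V : Set E) ⊆ P := subset_convexHull ℝ _
  obtain ⟨w, hwl, hwW⟩ := SetLike.exists_of_lt (vectorSpan_toExposed_le_ker.lt_of_ne hker)
  obtain ⟨n, hWn, hnw, hnV⟩ := exists_le_ker_apply_ne_zero_apply_lt hV hwW p
  obtain ⟨c, -, hc, v, hv, hnv, hcv⟩ :=
    exists_nonneg_mul_le_and_eq (f := fun v => l p - l v) (g := fun v => n p - n v)
      (fun v hv => sub_nonneg.2 (hp.2 v (hVP hv))) (by simpa using hnV)
  have hp' : p ∈ (l - c • n).toExposed P := by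
    refine mem_toExposed_convexHull hp.1 fun x hx => ?_
    simp only [sub_apply, smul_apply, smul_eq_mul]
    linarith [hc x hx]
  have hv' : v ∈ (l - c • n).toExposed P := by
    refine mem_toExposed_of_apply_eq hp' (hVP hv) ?_
    simp only [sub_apply, smul_apply, smul_eq_mul]
    linarith
  have hsubset : l.toExposed P ⊆ (l - c • n).toExposed P := fun x hx =>
    have hnx : n (x - p) = 0 := hWn (vsub_mem_vectorSpan ℝ hx hp)
    mem_toExposed_of_apply_eq hp' hx.1 <| by
      simp [apply_eq_of_mem_toExposed hx hp, sub_eq_zero.1 (map_sub n x p ▸ hnx)]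
  refine ⟨l - c • n, fun h => hl ?_, hp', (vectorSpan_mono ℝ hsubset).lt_of_ne fun h => hnv.ne' ?_⟩
  · have hlc : l = c • n := sub_eq_zero.1 h
    have hcw : c * n w = 0 := (DFunLike.congr_fun hlc w).symm.trans hwl
    rw [hlc, (mul_eq_zero.1 hcw).resolve_right hnw, zero_smul]
  · have hnpv : n (p - v) = 0 := hWn (h ▸ vsub_mem_vectorSpan ℝ hp' hv')
    rwa [map_sub] at hnpv

theorem exists_vectorSpan_toExposed_eq_ker
    (hint : (interior (convexHull ℝ (V : Set E))).Nonempty)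
    (hp : p ∈ convexHull ℝ (V : Set E) \ interior (convexHull ℝ (V : Set E))) :
    ∃ l : StrongDual ℝ E, l ≠ 0 ∧ p ∈ l.toExposed (convexHull ℝ (V : Set E)) ∧
      vectorSpan ℝ (l.toExposed (convexHull ℝ (V : Set E))) = l.ker := by
  set P := convexHull ℝ (V : Set E)
  have hV : vectorSpan ℝ (V : Set E) = ⊤ :=
    AffineSubspace.vectorSpan_eq_top_of_affineSpan_eq_top ℝ E E
      (affineSpan_eq_top_of_nonempty_interior hint)
  obtain ⟨l, ⟨hl, hpl⟩, hmax⟩ :=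
    (InvImage.wf (fun l : StrongDual ℝ E => vectorSpan ℝ (l.toExposed P)) wellFounded_gt).has_min
      {l | l ≠ 0 ∧ p ∈ l.toExposed P}
      (exists_mem_toExposed_of_mem_diff_interior (convex_convexHull ℝ _) hint hp)
  refine ⟨l, hl, hpl, ?_⟩
  by_contra hker
  obtain ⟨l', hl', hpl', hlt⟩ := exists_vectorSpan_toExposed_lt hV hl hpl hker
  exact hmax l' ⟨hl', hpl'⟩ hlt

end Facets

section Transversality

variable {d : ℕ} {α : Fin d → ℝ} {P F : Set (Fin d → ℝ)} {ν : Fin d → ℝ}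

theorem IsPolytope.convex (hP : IsPolytope P) : Convex ℝ P := by
  obtain ⟨V, rfl⟩ := hP
  exact convex_convexHull ℝ _

theorem IsPolytope.isClosed (hP : IsPolytope P) : IsClosed P := by
  obtain ⟨V, rfl⟩ := hP
  exact V.finite_toSet.isClosed_convexHull ℝ

theorem isFacet_toExposed {l : StrongDual ℝ (Fin d → ℝ)} (hl : l ≠ 0)
    (hker : vectorSpan ℝ (l.toExposed P) = l.ker) : IsFacet P (l.toExposed P) := by
  refine ⟨ContinuousLinearMap.toExposed.isExposed.isExtreme, ?_⟩
  have hrank : Module.finrank ℝ l.ker + 1 = Module.finrank ℝ (Fin d → ℝ) :=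
    Module.Dual.finrank_ker_add_one_of_ne_zero (f := l.toLinearMap)
      (ContinuousLinearMap.coe_injective.ne hl)
  rw [Module.finrank_fin_fun] at hrank
  rw [direction_affineSpan, hker]
  omega

theorem IsNormalVec.sum_mul_eq_zero (hν : IsNormalVec F ν) {v : Fin d → ℝ}
    (hv : v ∈ vectorSpan ℝ F) : ∑ i, ν i * v i = 0 := by
  have hle : vectorSpan ℝ F ≤ (dotProductBilin ℝ ℝ ν).ker :=
    vectorSpan_le_ker_of_forall_eq fun x hx y hy => by
      simpa [dotProduct, mul_sub, sub_eq_zero] using hν.2 x hx y hy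
  simpa [dotProduct] using hle hv

theorem IsPolytope.exists_mem_toExposed_apply_ne_zero (hP : IsPolytope P)
    (hint : (interior P).Nonempty)
    (hfac : ∀ F, Convex ℝ F → IsFacet P F → ∃ ν, IsNormalVec F ν ∧ (∑ i, ν i * α i) ≠ 0)
    {p : Fin d → ℝ} (hp : p ∈ frontier P) :
    ∃ l : StrongDual ℝ (Fin d → ℝ), p ∈ l.toExposed P ∧ l α ≠ 0 := by
  rw [hP.isClosed.frontier_eq] at hp
  have hconv := hP.convex
  obtain ⟨V, rfl⟩ := hP
  obtain ⟨l, hl, hpl, hker⟩ := exists_vectorSpan_toExposed_eq_ker hint hp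
  obtain ⟨ν, hν, hνα⟩ := hfac _ (ContinuousLinearMap.toExposed.isExposed.convex hconv)
    (isFacet_toExposed hl hker)
  exact ⟨l, hpl, fun hlα => hνα (hν.sum_mul_eq_zero (hker ▸ hlα))⟩

end Transversality

section FractionalParts

variable {ι : Type*} {S : Set (ι → ℝ)} {y : ι → ℝ}

theorem isClosed_range_intCast_pi : IsClosed (Set.range fun (k : ι → ℤ) i => (k i : ℝ)) := by
  have hpi := isClosed_set_pi (ι := ι) (i := Set.univ)
    fun _ _ => Int.isClosedEmbedding_coe_real.isClosed_range
  rwa [← Set.range_piMap] at hpi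

theorem fract_eq_sub_intCast_of_mem_interior_Icc [Finite ι] {k : ι → ℤ}
    (h : (y - fun i => (k i : ℝ)) ∈ interior (Set.Icc (0 : ι → ℝ) 1)) :
    (fun i => Int.fract (y i)) = y - fun i => (k i : ℝ) := by
  rw [← Set.pi_univ_Icc, interior_pi_set Set.finite_univ] at h
  ext i
  have hi : 0 < y i - k i ∧ y i - k i < 1 := by simpa using h i (Set.mem_univ i)
  exact Int.fract_eq_iff.2 ⟨hi.1.le, hi.2, k i, by simp⟩

open scoped Pointwise in
theorem continuousAt_indicator_fract [Finite ι] {M : Type*} [Zero M] [TopologicalSpace M] (c : M)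
    (hS : S ⊆ Set.Icc 0 1) (hy : ∀ k : ι → ℤ, (y - fun i => (k i : ℝ)) ∉ frontier S) :
    ContinuousAt (fun z : ι → ℝ => S.indicator (fun _ => c) fun i => Int.fract (z i)) y := by
  by_cases hmem : ∃ k : ι → ℤ, (y - fun i => (k i : ℝ)) ∈ closure S
  · obtain ⟨k, hk⟩ := hmem
    have hkint : (y - fun i => (k i : ℝ)) ∈ interior S := by
      by_contra h
      exact hy k ⟨hk, h⟩
    have hnear : ∀ᶠ z in 𝓝 y, (z - fun i => (k i : ℝ)) ∈ interior S :=
      (continuous_id.sub continuous_const).continuousAt.eventually_mem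
        (isOpen_interior.mem_nhds hkint)
    refine continuousAt_const (y := c) |>.congr ?_
    filter_upwards [hnear] with z hz
    rw [fract_eq_sub_intCast_of_mem_interior_Icc (interior_mono hS hz),
      Set.indicator_of_mem (interior_subset hz)]
  · have hcompact : IsCompact (closure S) :=
      isCompact_Icc.of_isClosed_subset isClosed_closure (closure_minimal hS isClosed_Icc)
    have hclosed : IsClosed (closure S + Set.range fun (k : ι → ℤ) i => (k i : ℝ)) :=
      isClosed_range_intCast_pi.add_left_of_isCompact hcompact
    have hy' : y ∉ closure S + Set.range fun (k : ι → ℤ) i => (k i : ℝ) := by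
      rintro ⟨x, hx, _, ⟨k, rfl⟩, rfl⟩
      exact hmem ⟨k, by simpa using hx⟩
    refine continuousAt_const (y := 0) |>.congr ?_
    filter_upwards [hclosed.isOpen_compl.mem_nhds hy'] with z hz
    refine (Set.indicator_of_notMem (fun hzS => hz ?_) _).symm
    exact ⟨_, subset_closure hzS, _, ⟨fun i => ⌊z i⌋, rfl⟩, funext fun i => Int.fract_add_floor _⟩

end FractionalParts

section Integral

variable {d : ℕ} {α : Fin d → ℝ} {P : Set (Fin d → ℝ)}

/-- The point `(y₁, …, y_{d-1}, t)` of `ℝ^d`. For `d = 0` there is no last coordinate and `t` is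
dropped. -/
def appendCoord (y : Fin (d - 1) → ℝ) (t : ℝ) : Fin d → ℝ :=
  fun j => if h : (j : ℕ) < d - 1 then y ⟨j, h⟩ else t

/-- The projection `(α₁, …, α_{d-1})` of `α ∈ ℝ^d`. -/
def initCoords (α : Fin d → ℝ) : Fin (d - 1) → ℝ :=
  fun i => α (i.castLE (d.sub_le 1))

theorem continuous_appendCoord :
    Continuous fun z : (Fin (d - 1) → ℝ) × ℝ => appendCoord z.1 z.2 := by
  refine continuous_pi fun j => ?_
  unfold appendCoord
  split_ifs <;> fun_prop

theorem appendCoord_add_smul (y v : Fin (d - 1) → ℝ) (s t r : ℝ) :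
    appendCoord (y + r • v) (s + r * t) = appendCoord y s + r • appendCoord v t := by
  ext j
  simp only [appendCoord, Pi.add_apply, Pi.smul_apply, smul_eq_mul]
  split_ifs <;> rfl

theorem appendCoord_initCoords (hd : 0 < d) (α : Fin d → ℝ) :
    appendCoord (initCoords α) (α ⟨d - 1, by omega⟩) = α := by
  ext j
  by_cases h : (j : ℕ) < d - 1
  · simp [appendCoord, initCoords, h]
  · have hj : j = ⟨d - 1, by omega⟩ := Fin.ext (by simp only; omega)
    simp [appendCoord, hj]

theorem fFun_eq_integral (α : Fin d → ℝ) (P : Set (Fin d → ℝ)) (x : Fin (d - 1) → ℝ) :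
    fFun α P x = ∫ t in (0 : ℝ)..1, P.indicator (fun _ => 1)
      (appendCoord (fun i => Int.fract ((x + t • initCoords α) i)) t) :=
  rfl

theorem continuousAt_indicator_appendCoord_fract (hsub : P ⊆ Set.Icc 0 1) {t : ℝ}
    {y : Fin (d - 1) → ℝ}
    (hy : ∀ k : Fin (d - 1) → ℤ, appendCoord (y - fun i => (k i : ℝ)) t ∉ frontier P) :
    ContinuousAt (fun z => P.indicator (fun _ => (1 : ℝ))
      (appendCoord (fun i => Int.fract (z i)) t)) y := by
  have hcont : Continuous fun z : Fin (d - 1) → ℝ => appendCoord z t :=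
    continuous_appendCoord.comp (.prodMk_left t)
  have hslice : (appendCoord · t) ⁻¹' P ⊆ Set.Icc 0 1 := by
    intro z hz
    have hbounds (i : Fin (d - 1)) : 0 ≤ z i ∧ z i ≤ 1 := by
      simpa [appendCoord] using
        And.intro ((hsub hz).1 (i.castLE (d.sub_le 1))) ((hsub hz).2 (i.castLE (d.sub_le 1)))
    exact ⟨fun i => (hbounds i).1, fun i => (hbounds i).2⟩
  exact continuousAt_indicator_fract 1 hslice fun k hk => hy k (hcont.frontier_preimage_subset P hk)

theorem measurable_appendCoord_fract (α : Fin d → ℝ) (x : Fin (d - 1) → ℝ) :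
    Measurable fun t : ℝ => appendCoord (fun i => Int.fract ((x + t • initCoords α) i)) t := by
  have hfract : Measurable fun t : ℝ => fun i => Int.fract ((x + t • initCoords α) i) :=
    measurable_pi_lambda _ fun i => by
      simp only [Pi.add_apply, Pi.smul_apply]
      fun_prop
  exact continuous_appendCoord.measurable.comp (hfract.prodMk measurable_id)

theorem continuous_fFun_of_ae_notMem_frontier (hd : 0 < d) (hα : α ⟨d - 1, by omega⟩ = 1)
    (hP : MeasurableSet P) (hsub : P ⊆ Set.Icc 0 1)
    (hfrontier : ∀ y, ∀ᵐ t : ℝ, y + t • α ∉ frontier P) : Continuous (fFun α P) := by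
  refine continuous_iff_continuousAt.2 fun x => ?_
  simp only [funext (fFun_eq_integral α P)]
  refine intervalIntegral.continuousAt_of_dominated_interval (bound := fun _ => 1)
    (.of_forall fun z => ?_) (.of_forall fun z => .of_forall fun t _ => ?_)
    intervalIntegrable_const ?_
  · exact ((measurable_const.indicator hP).comp
      (measurable_appendCoord_fract α z)).aestronglyMeasurable
  · exact (norm_indicator_le_norm_self _ _).trans (by simp)
  · have hshift : ∀ᵐ t : ℝ, ∀ k : Fin (d - 1) → ℤ,
        appendCoord (x - fun i => (k i : ℝ)) 0 + t • α ∉ frontier P :=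
      ae_all_iff.2 fun k => hfrontier _
    filter_upwards [hshift] with t ht _
    have hline (k : Fin (d - 1) → ℤ) : appendCoord (x + t • initCoords α - fun i => (k i : ℝ)) t =
        appendCoord (x - fun i => (k i : ℝ)) 0 + t • α := by
      have h := appendCoord_add_smul (x - fun i => (k i : ℝ)) (initCoords α) 0 1 t
      rwa [← hα, appendCoord_initCoords hd, hα, zero_add, mul_one, ← add_sub_right_comm] at h
    exact ContinuousAt.comp (f := fun z => z + t • initCoords α)
      (continuousAt_indicator_appendCoord_fract hsub fun k => hline k ▸ ht k) (by fun_prop)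

theorem fFun_add_intCast (α : Fin d → ℝ) (P : Set (Fin d → ℝ)) (x : Fin (d - 1) → ℝ)
    (m : Fin (d - 1) → ℤ) : fFun α P (x + fun i => (m i : ℝ)) = fFun α P x := by
  simp only [fFun, Pi.add_apply, add_right_comm, Int.fract_add_intCast]

end Integral

/- `IsExtreme` does not entail convexity, so a set satisfying `IsFacet` may be a union of
lower-dimensional faces, such as `d` affinely independent vertices; the convex ones are the facets
in the usual sense. -/
theorem fFun_continuous_and_periodic_general
    {d : ℕ} (hd : 0 < d) (α : Fin d → ℝ) (hαd : α ⟨d - 1, by omega⟩ = 1)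
    (P : Set (Fin d → ℝ)) (hpoly : IsPolytope P) (hsub : P ⊆ Set.Icc 0 1)
    (hint : (interior P).Nonempty)
    (hfac : ∀ F : Set (Fin d → ℝ), Convex ℝ F → IsFacet P F →
      ∃ ν : Fin d → ℝ, IsNormalVec F ν ∧ (∑ i, ν i * α i) ≠ 0) :
    Continuous (fFun α P) ∧
      ∀ (x : Fin (d - 1) → ℝ) (m : Fin (d - 1) → ℤ),
        fFun α P (x + fun i => (m i : ℝ)) = fFun α P x := by
  have hfrontier : ∀ y, ∀ᵐ t : ℝ, y + t • α ∉ frontier P :=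
    ae_add_smul_notMem_frontier hpoly.convex hpoly.isClosed fun _ hp =>
      hpoly.exists_mem_toExposed_apply_ne_zero hint hfac hp
  exact ⟨continuous_fFun_of_ae_notMem_frontier hd hαd hpoly.isClosed.measurableSet hsub hfrontier,
    fFun_add_intCast α P⟩

/-- If no facet of the polytope `P` is parallel to the direction `α` (with `α_d = 1`), then
the function `f` is continuous and periodic modulo `ℤ^{d-1}`. -/
theorem fFun_continuous_and_periodic
    {d : ℕ} (hd : 2 ≤ d) (α : Fin d → ℝ) (hαd : α ⟨d - 1, by omega⟩ = 1)
    (P : Set (Fin d → ℝ)) (hpoly : IsPolytope P) (hsub : P ⊆ Set.Icc 0 1)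
    (hint : (interior P).Nonempty)
    (hfac : ∀ F : Set (Fin d → ℝ), IsFacet P F →
      ∃ ν : Fin d → ℝ, IsNormalVec F ν ∧ (∑ i, ν i * α i) ≠ 0) :
    Continuous (fFun α P) ∧
      ∀ (x : Fin (d - 1) → ℝ) (m : Fin (d - 1) → ℤ),
        fFun α P (x + fun i => (m i : ℝ)) = fFun α P x :=
  fFun_continuous_and_periodic_general (by omega) α hαd P hpoly hsub hint fun F _ => hfac F
end

section
/- Let m ≥ 1, let f : ℝ^m → ℝ be continuous and periodic modulo ℤ^m, and suppose its Fourier coefficients f̂(n) = ∫_{[0,1]^m} f(x) e^{−2πi⟨n,x⟩} dx satisfy Σ_{n ∈ ℤ^m} |f̂(n)| < ∞. Then for every s ∈ ℝ^m, every α ∈ ℝ^m, and every positive integer T, | Σ_{k=0}^{T−1} ( f(s + kα) − f̂(0) ) | ≤ Σ_{n ∈ ℤ^m, n ≠ 0} |f̂(n)| / (2 ‖⟨n, α⟩‖). -/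
open MeasureTheory Real

/-!
Descended to the torus, `f` is the sum of its Fourier series. Along an orbit of the translation by
`α`, the character of frequency `n` is a geometric progression of ratio `e(⟨n, α⟩)`, whose partial
sums are at most `2 / |e(⟨n, α⟩) - 1| ≤ 1 / (2‖⟨n, α⟩‖)` by Jordan's inequality
`|sin (π y)| ≥ 2 |y|` for `|y| ≤ 1 / 2`. If the Fourier series does not converge absolutely, then
the bound is infinite, because `2‖⟨n, α⟩‖ ≤ 1`.
-/

section AddCircle

lemma nint_eq_norm_coe (x : ℝ) : nint x = ‖(x : UnitAddCircle)‖ :=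
  UnitAddCircle.norm_eq.symm

lemma ofReal_two_mul_norm {E : Type*} [SeminormedAddGroup E] (v : E) :
    ENNReal.ofReal (2 * ‖v‖) = 2 * ‖v‖ₑ := by
  rw [ENNReal.ofReal_mul zero_le_two, ENNReal.ofReal_ofNat, ofReal_norm]

lemma toCircle_sum {ι : Type*} {p : ℝ} (s : Finset ι) (u : ι → AddCircle p) :
    (∑ i ∈ s, u i).toCircle = ∏ i ∈ s, (u i).toCircle :=
  map_prod AddCircle.toCircle_addChar.toMonoidHom (fun i ↦ Multiplicative.ofAdd (u i)) s

lemma exists_coe_eq_and_abs_eq_norm {p : ℝ} (u : AddCircle p) :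
    ∃ x : ℝ, (x : AddCircle p) = u ∧ |x| = ‖u‖ := by
  induction u using QuotientAddGroup.induction_on with
  | H x =>
    refine ⟨x - round (p⁻¹ * x) * p, ?_, (AddCircle.norm_eq p).symm⟩
    rw [AddCircle.coe_sub, ← zsmul_eq_mul, AddCircle.coe_zsmul, AddCircle.coe_period, smul_zero,
      sub_zero]

lemma two_mul_norm_le_one (u : UnitAddCircle) : 2 * ‖u‖ ≤ 1 := by
  have h := AddCircle.norm_le_half_period 1 one_ne_zero (x := u)
  rw [abs_one] at h
  linarith

lemma four_mul_norm_le_norm_toCircle_sub_one (u : UnitAddCircle) :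
    4 * ‖u‖ ≤ ‖(u.toCircle : ℂ) - 1‖ := by
  obtain ⟨x, rfl, hx⟩ := exists_coe_eq_and_abs_eq_norm u
  have habs : |π * x| = π * |x| := by rw [abs_mul, abs_of_pos pi_pos]
  have hhalf : |π * x| ≤ π / 2 := by
    rw [habs]
    nlinarith [pi_pos, two_mul_norm_le_one (x : UnitAddCircle)]
  have hnorm : ‖(AddCircle.toCircle (x : UnitAddCircle) : ℂ) - 1‖ = 2 * |sin (π * x)| := by
    rw [AddCircle.toCircle_apply_mk, Circle.coe_exp, mul_comm _ Complex.I,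
      Complex.norm_exp_I_mul_ofReal_sub_one, norm_mul, norm_eq_abs, norm_eq_abs, abs_two]
    ring_nf
  calc 4 * ‖(x : UnitAddCircle)‖ = 2 * (2 / π * |π * x|) := by rw [habs, hx]; field_simp; ring
    _ ≤ 2 * |sin (π * x)| := by gcongr; exact mul_abs_le_abs_sin hhalf
    _ = _ := hnorm.symm

lemma enorm_geom_sum_toCircle_le (u : UnitAddCircle) (T : ℕ) :
    ‖∑ k ∈ Finset.range T, (u.toCircle : ℂ) ^ k‖ₑ ≤ (2 * ‖u‖ₑ)⁻¹ := by
  set S := ∑ k ∈ Finset.range T, (u.toCircle : ℂ) ^ k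
  have hgeom : ‖S‖ * (4 * ‖u‖) ≤ 2 := calc
    ‖S‖ * (4 * ‖u‖) ≤ ‖S‖ * ‖(u.toCircle : ℂ) - 1‖ := by
      gcongr
      exact four_mul_norm_le_norm_toCircle_sub_one u
    _ = ‖(u.toCircle : ℂ) ^ T - 1‖ := by rw [← norm_mul, geom_sum_mul]
    _ ≤ ‖(u.toCircle : ℂ) ^ T‖ + ‖(1 : ℂ)‖ := norm_sub_le _ _
    _ = 2 := by rw [norm_pow, Circle.norm_coe, one_pow, norm_one, one_add_one_eq_two]
  rw [ENNReal.le_inv_iff_mul_le, ← ofReal_two_mul_norm, ← ofReal_norm,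
    ← ENNReal.ofReal_mul (norm_nonneg _), ENNReal.ofReal_le_one]
  linarith

lemma summable_of_tsum_enorm_div_two_mul_ne_top {ι E : Type*} [NormedAddCommGroup E]
    [CompleteSpace E] {c : ι → E} {u : ι → UnitAddCircle}
    (h : ∑' i, ‖c i‖ₑ / (2 * ‖u i‖ₑ) ≠ ⊤) : Summable c := by
  have hle (i : ι) : 2 * ‖u i‖ₑ ≤ 1 := by
    rw [← ofReal_two_mul_norm, ENNReal.ofReal_le_one]
    exact two_mul_norm_le_one (u i)
  refine Summable.of_enorm <| ne_top_of_le_ne_top h <| ENNReal.tsum_le_tsum fun i ↦ ?_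
  calc ‖c i‖ₑ = ‖c i‖ₑ / 1 := (div_one _).symm
    _ ≤ ‖c i‖ₑ / (2 * ‖u i‖ₑ) := ENNReal.div_le_div_left (hle i) _

end AddCircle

section UnitAddTorus

variable {d : Type*} [Fintype d]

open UnitAddTorus (mFourier mFourierCoeff)

lemma mFourier_apply_eq_toCircle (n : d → ℤ) (t : UnitAddTorus d) :
    mFourier n t = (∑ i, n i • t i).toCircle := by
  simp only [mFourier, ContinuousMap.coe_mk, fourier_apply, toCircle_sum]
  exact (map_prod Circle.coeHom _ _).symm

lemma mFourier_apply_coe (n : d → ℤ) (x : d → ℝ) :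
    mFourier n (fun i ↦ (x i : UnitAddCircle)) =
      Complex.exp ((2 * π * ∑ i, (n i : ℝ) * x i : ℝ) * Complex.I) := by
  have hsum : ∑ i, n i • (x i : UnitAddCircle) = (∑ i, (n i : ℝ) * x i : ℝ) := by
    simp
  rw [mFourier_apply_eq_toCircle, hsum, AddCircle.toCircle_apply_mk, Circle.coe_exp, div_one]

lemma mFourierCoeff_eq_setIntegral_Icc {E : Type*} [NormedAddCommGroup E] [NormedSpace ℂ E]
    (F : UnitAddTorus d → E) (n : d → ℤ) :
    mFourierCoeff F n = ∫ x in Set.Icc (0 : d → ℝ) 1,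
      Complex.exp (-(2 * π * (∑ i, (n i : ℝ) * x i) : ℝ) * Complex.I) •
        F (fun i ↦ (x i : UnitAddCircle)) := by
  have hcube : {x : d → ℝ | ∀ i, x i ∈ Set.Ioc ((0 : d → ℝ) i) ((0 : d → ℝ) i + 1)} =
      Set.univ.pi fun i ↦ Set.Ioc ((0 : d → ℝ) i) ((1 : d → ℝ) i) := by
    ext x
    simp
  rw [UnitAddTorus.mFourierCoeff_eq_integral F n 0, hcube, volume_pi,
    Measure.restrict_congr_set Measure.univ_pi_Ioc_ae_eq_Icc]
  congr 1 with x
  rw [mFourier_apply_coe]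
  simp

lemma mFourier_apply_add_nsmul (n : d → ℤ) (t a : UnitAddTorus d) (k : ℕ) :
    mFourier n (t + k • a) = mFourier n t * ((∑ i, n i • a i).toCircle : ℂ) ^ k := by
  simp only [mFourier_apply_eq_toCircle, Pi.add_apply, Pi.smul_apply, smul_add,
    Finset.sum_add_distrib, smul_comm _ k, ← Finset.smul_sum, AddCircle.toCircle_add,
    AddCircle.toCircle_nsmul, Circle.coe_mul, Circle.coe_pow]

lemma enorm_sum_mul_mFourier_le (c : ℂ) (n : d → ℤ) (t a : UnitAddTorus d) (T : ℕ) :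
    ‖∑ k ∈ Finset.range T, c * mFourier n (t + k • a)‖ₑ ≤
      ‖c‖ₑ / (2 * ‖∑ i, n i • a i‖ₑ) := by
  have hunit : ‖mFourier n t‖ₑ = 1 := by
    rw [mFourier_apply_eq_toCircle, ← ofReal_norm, Circle.norm_coe, ENNReal.ofReal_one]
  simp only [mFourier_apply_add_nsmul, ← Finset.mul_sum]
  rw [enorm_mul, enorm_mul, hunit, one_mul, div_eq_mul_inv]
  gcongr
  exact enorm_geom_sum_toCircle_le _ T

lemma hasSum_mFourierCoeff_mul_of_ne_zero {F : C(UnitAddTorus d, ℂ)}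
    (hF : Summable (mFourierCoeff F)) (t : UnitAddTorus d) :
    HasSum (fun n : {n : d → ℤ // n ≠ 0} ↦ mFourierCoeff F n * mFourier n t)
      (F t - mFourierCoeff F 0) := by
  have h := UnitAddTorus.hasSum_mFourier_series_apply_of_summable hF t
  rw [HasSum.hasSum_iff_compl (s := {0}) (hasSum_unique _)] at h
  simp only [Function.comp_def, Set.default_coe_singleton, UnitAddTorus.mFourier_zero,
    ContinuousMap.one_apply, smul_eq_mul, mul_one] at h
  exact h

theorem enorm_sum_translate_sub_mFourierCoeff_zero_le (F : C(UnitAddTorus d, ℂ))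
    (t a : UnitAddTorus d) (T : ℕ) :
    ‖∑ k ∈ Finset.range T, (F (t + k • a) - mFourierCoeff F 0)‖ₑ ≤
      ∑' n : {n : d → ℤ // n ≠ 0}, ‖mFourierCoeff F n‖ₑ / (2 * ‖∑ i, n.1 i • a i‖ₑ) := by
  by_cases htop :
      ∑' n : {n : d → ℤ // n ≠ 0}, ‖mFourierCoeff F n‖ₑ / (2 * ‖∑ i, n.1 i • a i‖ₑ) = ⊤
  · exact htop ▸ le_top
  have hF : Summable (mFourierCoeff F) := (Set.finite_singleton 0).summable_compl_iff.mp
    (summable_of_tsum_enorm_div_two_mul_ne_top htop)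
  have hseries := hasSum_sum fun k (_ : k ∈ Finset.range T) ↦
    hasSum_mFourierCoeff_mul_of_ne_zero hF (t + k • a)
  exact hseries.enorm_le_of_bounded ENNReal.summable.hasSum fun n ↦
    enorm_sum_mul_mFourier_le _ _ t a T

end UnitAddTorus

section Periodic

variable {d : Type*}

lemma eq_of_coe_eq_of_periodic {E : Type*} {f : (d → ℝ) → E}
    (hper : ∀ (x : d → ℝ) (v : d → ℤ), f (x + fun i ↦ (v i : ℝ)) = f x) {x y : d → ℝ}
    (hxy : ∀ i, (x i : UnitAddCircle) = y i) : f x = f y := by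
  have hdiff (i : d) : ∃ v : ℤ, (v : ℝ) = x i - y i := by
    have hzero : ((x i - y i : ℝ) : UnitAddCircle) = 0 := by rw [AddCircle.coe_sub, hxy, sub_self]
    simpa using (AddCircle.coe_eq_zero_iff 1).mp hzero
  choose v hv using hdiff
  rw [← hper y v]
  congr 1 with i
  simp [hv]

lemma exists_continuousMap_unitAddTorus {E : Type*} [TopologicalSpace E] {f : (d → ℝ) → E}
    (hf : Continuous f)
    (hper : ∀ (x : d → ℝ) (v : d → ℤ), f (x + fun i ↦ (v i : ℝ)) = f x) :
    ∃ F : C(UnitAddTorus d, E), ∀ x : d → ℝ, F (fun i ↦ (x i : UnitAddCircle)) = f x := by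
  let proj : C(d → ℝ, UnitAddTorus d) :=
    ⟨fun x i ↦ (x i : UnitAddCircle), by fun_prop⟩
  have hproj : Topology.IsQuotientMap proj :=
    (IsOpenQuotientMap.piMap fun _ ↦ QuotientAddGroup.isOpenQuotientMap_mk).isQuotientMap
  have hfactor : Function.FactorsThrough (⟨f, hf⟩ : C(d → ℝ, E)) proj := fun _ _ h ↦
    eq_of_coe_eq_of_periodic hper (congrFun h)
  exact ⟨hproj.lift ⟨f, hf⟩ hfactor, DFunLike.congr_fun (hproj.lift_comp ⟨f, hf⟩ hfactor)⟩

end Periodic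

theorem ergodic_sum_fourier_bound_general {d : Type*} [Fintype d] (f : (d → ℝ) → ℂ)
    (hf : Continuous f)
    (hper : ∀ (x : d → ℝ) (v : d → ℤ), f (x + fun i ↦ (v i : ℝ)) = f x)
    (fhat : (d → ℤ) → ℂ)
    (hfhat : ∀ n, fhat n = ∫ x in Set.Icc (0 : d → ℝ) 1,
      f x * Complex.exp (-(2 * π * (∑ i, (n i : ℝ) * x i) : ℝ) * Complex.I))
    (s α : d → ℝ) (T : ℕ) :
    ENNReal.ofReal ‖∑ k ∈ Finset.range T, (f (s + (k : ℝ) • α) - fhat 0)‖ ≤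
      ∑' n : {n : d → ℤ // n ≠ 0},
        ENNReal.ofReal ‖fhat n.1‖ / ENNReal.ofReal (2 * nint (∑ i, (n.1 i : ℝ) * α i)) := by
  obtain ⟨F, hF⟩ := exists_continuousMap_unitAddTorus hf hper
  obtain rfl : UnitAddTorus.mFourierCoeff F = fhat := by
    ext n
    simp only [mFourierCoeff_eq_setIntegral_Icc, hF, hfhat, smul_eq_mul, mul_comm]
  have horbit (k : ℕ) : f (s + (k : ℝ) • α) =
      F ((fun i ↦ (s i : UnitAddCircle)) + k • fun i ↦ (α i : UnitAddCircle)) := by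
    rw [← hF]
    congr 1 with i
    simp
  have hpairing (n : d → ℤ) : ((∑ i, (n i : ℝ) * α i : ℝ) : UnitAddCircle) =
      ∑ i, n i • (α i : UnitAddCircle) := by
    simp
  simp only [ofReal_norm, nint_eq_norm_coe, ofReal_two_mul_norm, horbit, hpairing]
  exact enorm_sum_translate_sub_mFourierCoeff_zero_le F _ _ T

/-- If `f : ℝ^m → ℝ` is continuous, periodic modulo `ℤ^m`, and its Fourier series is
absolutely convergent, then the ergodic sums of `f` along a translation with direction `α`
satisfy `|∑_{k<T} (f(s+kα) - f̂(0))| ≤ ∑_{n ≠ 0} |f̂(n)|/(2‖⟨n,α⟩‖)`, the right-hand side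
being computed in `ℝ≥0∞` (with `a/0 = ∞` for `a ≠ 0`). -/
theorem ergodic_sum_fourier_bound
    {m : ℕ} (hm : 1 ≤ m) (f : (Fin m → ℝ) → ℝ)
    (hf : Continuous f)
    (hper : ∀ (x : Fin m → ℝ) (v : Fin m → ℤ), f (x + fun i => (v i : ℝ)) = f x)
    (fhat : (Fin m → ℤ) → ℂ)
    (hfhat : ∀ n, fhat n = ∫ x in Set.Icc (0 : Fin m → ℝ) 1,
      (f x : ℂ) * Complex.exp (-(2 * π * (∑ i, (n i : ℝ) * x i) : ℝ) * Complex.I))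
    (hsum : Summable fun n : Fin m → ℤ => ‖fhat n‖)
    (s α : Fin m → ℝ) (T : ℕ) (hT : 0 < T) :
    ENNReal.ofReal ‖∑ k ∈ Finset.range T, (((f (s + (k : ℝ) • α)) : ℂ) - fhat 0)‖ ≤
      ∑' n : {n : Fin m → ℤ // n ≠ 0},
        ENNReal.ofReal ‖fhat n.1‖ /
          ENNReal.ofReal (2 * nint (∑ i, (n.1 i : ℝ) * α i)) :=
  ergodic_sum_fourier_bound_general (fun x ↦ (f x : ℂ)) (by fun_prop)
    (fun x v ↦ congrArg _ (hper x v)) fhat hfhat s α T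
end

section
/- Let H ≥ 1 be a real number, let S be a finite set, and let g : S → (−1/2, 1/2] be a function such that |g(n)| ≥ 1/H for every n ∈ S and |g(n) − g(m)| > 1/H for all distinct n, m ∈ S. Then Σ_{n ∈ S} 1/|g(n)| ≤ 2 Σ_{1 ≤ h ≤ H/2} H/h, where the sum on the right runs over positive integers h with h ≤ H/2. -/
/-!
After rescaling, the values `x = H * g n` are `1`-separated, so among those of one sign each
integer part `⌊|x|⌋₊` occurs at most once. Since `x ↦ H / x` is antitone, replacing every `|x|` by
its integer part only increases the sum, and each sign contributes at most the sum over all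
possible integer parts.
-/

section UnitSeparated

variable {R : Type*} [Ring R] [LinearOrder R] [IsStrictOrderedRing R] [FloorSemiring R]

theorem abs_sub_lt_one_of_natFloor_eq_natFloor {a b : R} (ha : 0 ≤ a) (hb : 0 ≤ b)
    (h : ⌊a⌋₊ = ⌊b⌋₊) : |a - b| < 1 := by
  have hfloor : (⌊a⌋₊ : R) = ⌊b⌋₊ := congrArg Nat.cast h
  have hab : a < b + 1 := by
    calc a < ⌊a⌋₊ + 1 := Nat.lt_floor_add_one a
      _ ≤ b + 1 := by rw [hfloor]; gcongr; exact Nat.floor_le hb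
  have hba : b < a + 1 := by
    calc b < ⌊b⌋₊ + 1 := Nat.lt_floor_add_one b
      _ ≤ a + 1 := by rw [← hfloor]; gcongr; exact Nat.floor_le ha
  exact abs_sub_lt_iff.2 ⟨sub_lt_iff_lt_add'.2 hab, sub_lt_iff_lt_add'.2 hba⟩

theorem injOn_natFloor_of_pairwise_one_le_abs_sub {ι : Type*} {s : Set ι} {f : ι → R}
    (hf : ∀ i ∈ s, 0 ≤ f i) (hsep : s.Pairwise fun i j => 1 ≤ |f i - f j|) :
    s.InjOn fun i => ⌊f i⌋₊ := fun i hi j hj hij => by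
  by_contra hne
  exact (hsep hi hj hne).not_gt
    (abs_sub_lt_one_of_natFloor_eq_natFloor (hf i hi) (hf j hj) hij)

variable {M : Type*} [AddCommMonoid M] [PartialOrder M] [IsOrderedAddMonoid M]
  {ι : Type*} {S : Finset ι} {f : ι → R} {B : R} {φ : R → M}

theorem sum_le_sum_Icc_of_antitoneOn (hφ : AntitoneOn φ (Set.Icc 1 B))
    (hφ_nonneg : ∀ x ∈ Set.Icc 1 B, 0 ≤ φ x) (hf : ∀ i ∈ S, f i ∈ Set.Icc 1 B)
    (hsep : (S : Set ι).Pairwise fun i j => 1 ≤ |f i - f j|) :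
    ∑ i ∈ S, φ (f i) ≤ ∑ h ∈ Finset.Icc 1 ⌊B⌋₊, φ h := by
  have hf_nonneg : ∀ i ∈ S, 0 ≤ f i := fun i hi => zero_le_one.trans (hf i hi).1
  have hcast_mem : ∀ h ∈ Finset.Icc 1 ⌊B⌋₊, (h : R) ∈ Set.Icc 1 B := fun h hh => by
    obtain ⟨h_one, h_floor⟩ := Finset.mem_Icc.1 hh
    exact ⟨Nat.one_le_cast.2 h_one, (Nat.le_floor_iff' (Nat.one_le_iff_ne_zero.1 h_one)).1 h_floor⟩
  have hfloor_mem : ∀ i ∈ S, ⌊f i⌋₊ ∈ Finset.Icc 1 ⌊B⌋₊ := fun i hi =>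
    Finset.mem_Icc.2 ⟨(Nat.one_le_floor_iff _).2 (hf i hi).1, Nat.floor_le_floor (hf i hi).2⟩
  calc ∑ i ∈ S, φ (f i) ≤ ∑ i ∈ S, φ ⌊f i⌋₊ := Finset.sum_le_sum fun i hi =>
        hφ (hcast_mem _ (hfloor_mem i hi)) (hf i hi) (Nat.floor_le (hf_nonneg i hi))
    _ = ∑ h ∈ S.image fun i => ⌊f i⌋₊, φ h := by
        rw [Finset.sum_image (injOn_natFloor_of_pairwise_one_le_abs_sub hf_nonneg hsep)]
    _ ≤ ∑ h ∈ Finset.Icc 1 ⌊B⌋₊, φ h :=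
        Finset.sum_le_sum_of_subset_of_nonneg (Finset.image_subset_iff.2 hfloor_mem)
          fun h hh _ => hφ_nonneg h (hcast_mem h hh)

theorem sum_abs_le_two_nsmul_sum_Icc_of_antitoneOn (hφ : AntitoneOn φ (Set.Icc 1 B))
    (hφ_nonneg : ∀ x ∈ Set.Icc 1 B, 0 ≤ φ x) (hf : ∀ i ∈ S, |f i| ∈ Set.Icc 1 B)
    (hsep : (S : Set ι).Pairwise fun i j => 1 ≤ |f i - f j|) :
    ∑ i ∈ S, φ |f i| ≤ 2 • ∑ h ∈ Finset.Icc 1 ⌊B⌋₊, φ h := by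
  have hnonneg : ∑ i ∈ S with 0 ≤ f i, φ |f i| ≤ ∑ h ∈ Finset.Icc 1 ⌊B⌋₊, φ h := by
    refine sum_le_sum_Icc_of_antitoneOn hφ hφ_nonneg (fun i hi => hf i (Finset.mem_filter.1 hi).1)
      fun i hi j hj hij => ?_
    obtain ⟨hiS, hi⟩ := Finset.mem_filter.1 hi
    obtain ⟨hjS, hj⟩ := Finset.mem_filter.1 hj
    simpa only [abs_of_nonneg hi, abs_of_nonneg hj] using hsep hiS hjS hij
  have hneg : ∑ i ∈ S with ¬0 ≤ f i, φ |f i| ≤ ∑ h ∈ Finset.Icc 1 ⌊B⌋₊, φ h := by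
    refine sum_le_sum_Icc_of_antitoneOn hφ hφ_nonneg (fun i hi => hf i (Finset.mem_filter.1 hi).1)
      fun i hi j hj hij => ?_
    obtain ⟨hiS, hi⟩ := Finset.mem_filter.1 hi
    obtain ⟨hjS, hj⟩ := Finset.mem_filter.1 hj
    simpa only [abs_of_neg (not_le.1 hi), abs_of_neg (not_le.1 hj), neg_sub_neg]
      using hsep hjS hiS hij.symm
  rw [← Finset.sum_filter_add_sum_filter_not S (fun i => 0 ≤ f i), two_nsmul]
  exact add_le_add hnonneg hneg

end UnitSeparated

theorem sum_inv_abs_le_of_separated_general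
    {K : Type*} [Field K] [LinearOrder K] [IsStrictOrderedRing K] [FloorSemiring K]
    {H B : K} (hH : 0 < H) {ι : Type*} {S : Finset ι} {g : ι → K}
    (hup : ∀ n ∈ S, |g n| ≤ B) (hlow : ∀ n ∈ S, 1 / H ≤ |g n|)
    (hsep : (S : Set ι).Pairwise fun n m => 1 / H ≤ |g n - g m|) :
    ∑ n ∈ S, 1 / |g n| ≤ 2 * ∑ h ∈ Finset.Icc 1 ⌊H * B⌋₊, H / (h : K) := by
  have habs_mul (x : K) : |H * x| = H * |x| := by rw [abs_mul, abs_of_pos hH]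
  have hanti : AntitoneOn (fun x => H / x) (Set.Icc 1 (H * B)) := fun x hx y _ hxy =>
    div_le_div_of_nonneg_left hH.le (zero_lt_one.trans_le hx.1) hxy
  have hnonneg : ∀ x ∈ Set.Icc 1 (H * B), 0 ≤ H / x := fun x hx =>
    div_nonneg hH.le (zero_le_one.trans hx.1)
  have hmem : ∀ n ∈ S, |H * g n| ∈ Set.Icc 1 (H * B) := fun n hn => by
    rw [habs_mul]
    exact ⟨(div_le_iff₀' hH).1 (hlow n hn), mul_le_mul_of_nonneg_left (hup n hn) hH.le⟩
  have hsep_scaled : (S : Set ι).Pairwise fun n m => 1 ≤ |H * g n - H * g m| :=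
    hsep.imp fun n m hnm => by
      rw [← mul_sub, habs_mul]
      exact (div_le_iff₀' hH).1 hnm
  calc ∑ n ∈ S, 1 / |g n| = ∑ n ∈ S, H / |H * g n| := Finset.sum_congr rfl fun n _ => by
        rw [habs_mul, div_mul_cancel_left₀ hH.ne', one_div]
    _ ≤ 2 • ∑ h ∈ Finset.Icc 1 ⌊H * B⌋₊, H / (h : K) :=
        sum_abs_le_two_nsmul_sum_Icc_of_antitoneOn hanti hnonneg hmem hsep_scaled
    _ = 2 * ∑ h ∈ Finset.Icc 1 ⌊H * B⌋₊, H / (h : K) := by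
        rw [nsmul_eq_mul, Nat.cast_ofNat]

/-- Pigeonhole counting bound: if `g` takes values in `(-1/2, 1/2]`, avoids `(-1/H, 1/H)`,
and its values on `S` are `1/H`-separated, then `∑_{n ∈ S} 1/|g(n)| ≤ 2 ∑_{1 ≤ h ≤ H/2} H/h`. -/
theorem sum_inv_abs_le_of_separated
    (H : ℝ) (hH : 1 ≤ H) {ι : Type*} (S : Finset ι) (g : ι → ℝ)
    (hrange : ∀ n ∈ S, g n ∈ Set.Ioc (-(1 / 2) : ℝ) (1 / 2))
    (hlow : ∀ n ∈ S, 1 / H ≤ |g n|)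
    (hsep : ∀ n ∈ S, ∀ m ∈ S, n ≠ m → 1 / H < |g n - g m|) :
    ∑ n ∈ S, 1 / |g n| ≤ 2 * ∑ h ∈ Finset.Icc 1 ⌊H / 2⌋₊, H / (h : ℝ) := by
  simpa only [mul_one_div] using sum_inv_abs_le_of_separated_general (zero_lt_one.trans_le hH)
    (fun n hn => abs_le.2 ⟨(hrange n hn).1.le, (hrange n hn).2⟩) hlow
    fun n hn m hm hnm => (hsep n hn m hm hnm).le
end

section
/- Let d ≥ 1, let α ∈ ℝ^d, let s ∈ [0,1]^d, and let P ⊆ [0,1]^d be a polytope with 0 < λ(P) < 1, where λ is Lebesgue measure. Then Δ_T(s, α, P) = Ω(1), i.e., limsup_{T → ∞} |Δ_T(s, α, P)| > 0. -/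
open MeasureTheory Real

/-- `Δ_T(s, α, A) = ∫_0^T χ_A({s+tα}) dt - T·λ(A)` for `A ⊆ [0,1]^d`. -/
noncomputable def Delta {d : ℕ} (s α : Fin d → ℝ) (A : Set (Fin d → ℝ)) (T : ℝ) : ℝ :=
  (∫ t in (0:ℝ)..T, Set.indicator A (fun _ => (1:ℝ)) (fun i => Int.fract (s i + t * α i)))
    - T * (volume A).toReal

/-!
A linear flow wraps around the torus only boundedly often per unit of time, and between two wraps
it is a straight segment, which meets a convex set `P` in an interval. So there is a fixed `ℓ > 0`
such that, beyond any time, the flow spends some period of length `ℓ` entirely inside or entirely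
outside `P`. Over such a period the discrepancy changes by `ℓ (1 - λ(P))` or `-ℓ λ(P)`, so
it is bounded away from `0` at one of the two ends.
-/

section

open Set

/-- Uniform local constancy of a function on the line: for each `L > 0` there is `ℓ > 0` such that
every interval of length `L` contains an interval of length `ℓ` on which the function is constant.
Quantifying over `L` makes finitely many such functions have common plateaus. -/
def HasPlateaus {β : Type*} (f : ℝ → β) : Prop :=
  ∀ L > 0, ∃ ℓ > 0, ∀ a, ∃ b, Icc b (b + ℓ) ⊆ Icc a (a + L) ∧
    ∀ t ∈ Icc b (b + ℓ), ∀ u ∈ Icc b (b + ℓ), f t = f u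

theorem HasPlateaus.pi {ι : Type*} [Finite ι] {β : ι → Type*} {f : ∀ i, ℝ → β i}
    (hf : ∀ i, HasPlateaus (f i)) : HasPlateaus fun t i => f i t := by
  classical
  have := Fintype.ofFinite ι
  suffices key : ∀ S : Finset ι, ∀ L > 0, ∃ ℓ > 0, ∀ a, ∃ b, Icc b (b + ℓ) ⊆ Icc a (a + L) ∧
      ∀ i ∈ S, ∀ t ∈ Icc b (b + ℓ), ∀ u ∈ Icc b (b + ℓ), f i t = f i u by
    intro L hL
    obtain ⟨ℓ, hℓ, h⟩ := key Finset.univ L hL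
    refine ⟨ℓ, hℓ, fun a => ?_⟩
    obtain ⟨b, hb, hconst⟩ := h a
    exact ⟨b, hb, fun t ht u hu => funext fun i => hconst i (Finset.mem_univ i) t ht u hu⟩
  intro S L hL
  induction S using Finset.induction_on with
  | empty => exact ⟨L, hL, fun a => ⟨a, Subset.rfl, by simp⟩⟩
  | insert i S _ ih =>
    obtain ⟨M, hM, hS⟩ := ih
    obtain ⟨ℓ, hℓ, hi⟩ := hf i M hM
    refine ⟨ℓ, hℓ, fun a => ?_⟩
    obtain ⟨b, hb, hbS⟩ := hS a
    obtain ⟨c, hc, hci⟩ := hi b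
    exact ⟨c, hc.trans hb, Finset.forall_mem_insert _ _ _ |>.2
      ⟨hci, fun j hj t ht u hu => hbS j hj t (hc ht) u (hc hu)⟩⟩

theorem HasPlateaus.exists_ge {β : Type*} {f : ℝ → β} (hf : HasPlateaus f) :
    ∃ ℓ > 0, ∀ a, ∃ b ≥ a, ∀ t ∈ Icc b (b + ℓ), ∀ u ∈ Icc b (b + ℓ), f t = f u := by
  obtain ⟨ℓ, hℓ, h⟩ := hf 1 one_pos
  refine ⟨ℓ, hℓ, fun a => ?_⟩
  obtain ⟨b, hb, hconst⟩ := h a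
  exact ⟨b, (hb (left_mem_Icc.2 (by linarith))).1, hconst⟩

section Floor

variable {R : Type*} [CommRing R] [LinearOrder R] [IsStrictOrderedRing R] [FloorRing R]

theorem abs_floor_sub_floor_le_one {x y : R} (h : |x - y| < 1) : |⌊x⌋ - ⌊y⌋| ≤ 1 := by
  obtain ⟨hyx, hxy⟩ := abs_lt.1 h
  have hx : ⌊x⌋ ≤ ⌊y⌋ + 1 := Int.floor_add_one y ▸ Int.floor_mono (by linarith)
  have hy : ⌊y⌋ ≤ ⌊x⌋ + 1 := Int.floor_add_one x ▸ Int.floor_mono (by linarith)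
  exact abs_le.2 ⟨by lia, by lia⟩

theorem floor_add_mul_mem_uIcc (s α : R) {x t y : R} (ht : t ∈ Icc x y) :
    ⌊s + t * α⌋ ∈ uIcc ⌊s + x * α⌋ ⌊s + y * α⌋ := by
  rcases le_total 0 α with hα | hα
  · have hmono : Monotone fun t => ⌊s + t * α⌋ := fun _ _ h => Int.floor_mono (by gcongr)
    exact Icc_subset_uIcc ⟨hmono ht.1, hmono ht.2⟩
  · have hanti : Antitone fun t => ⌊s + t * α⌋ := fun _ _ h =>
      Int.floor_mono (add_le_add_right (mul_le_mul_of_nonpos_right h hα) s)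
    exact Icc_subset_uIcc' ⟨hanti ht.2, hanti ht.1⟩

theorem floor_add_mul_eq_of_endpoints_eq {s α x y : R} (h : ⌊s + x * α⌋ = ⌊s + y * α⌋) :
    ∀ t ∈ Icc x y, ∀ u ∈ Icc x y, ⌊s + t * α⌋ = ⌊s + u * α⌋ := by
  have hconst : ∀ t ∈ Icc x y, ⌊s + t * α⌋ = ⌊s + y * α⌋ := fun t ht => by
    simpa [h] using floor_add_mul_mem_uIcc s α ht
  exact fun t ht u hu => (hconst t ht).trans (hconst u hu).symm

end Floor

/-- The floor changes by at most `1` over a short interval, so its value at the midpoint agrees with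
its value at one of the ends. -/
theorem hasPlateaus_floor_add_mul (s α : ℝ) : HasPlateaus fun t => ⌊s + t * α⌋ := by
  intro L hL
  set M := min L (1 / (|α| + 1))
  have hM : 0 < M := lt_min hL (by positivity)
  have hMα : M * |α| < 1 := by
    have : M * (|α| + 1) ≤ 1 := (le_div_iff₀ (by positivity)).1 (min_le_right _ _)
    linarith
  refine ⟨M / 2, by positivity, fun a => ?_⟩
  have hML : M ≤ L := min_le_left _ _
  have hvar : |⌊s + (a + M) * α⌋ - ⌊s + a * α⌋| ≤ 1 := by
    refine abs_floor_sub_floor_le_one ?_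
    rwa [show s + (a + M) * α - (s + a * α) = M * α by ring, abs_mul, abs_of_pos hM]
  have hmid := floor_add_mul_mem_uIcc s α (x := a) (t := a + M / 2) (y := a + M)
    ⟨by linarith, by linarith⟩
  have hend : ⌊s + a * α⌋ = ⌊s + (a + M / 2) * α⌋ ∨
      ⌊s + (a + M / 2) * α⌋ = ⌊s + (a + M / 2 + M / 2) * α⌋ := by
    rw [add_assoc a, add_halves]
    rw [mem_uIcc] at hmid
    rw [abs_le] at hvar
    lia
  rcases hend with hleft | hright
  · exact ⟨a, Icc_subset_Icc_right (by linarith), floor_add_mul_eq_of_endpoints_eq hleft⟩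
  · exact ⟨a + M / 2, Icc_subset_Icc (by linarith) (by linarith),
      floor_add_mul_eq_of_endpoints_eq hright⟩

theorem subset_Iio_or_subset_Ioi_of_notMem {X : Type*} [LinearOrder X] {A : Set X}
    (hA : A.OrdConnected) {p : X} (hp : p ∉ A) : A ⊆ Iio p ∨ A ⊆ Ioi p := by
  by_contra! h
  obtain ⟨⟨x, hx, hpx⟩, ⟨y, hy, hyp⟩⟩ := h.imp not_subset.1 not_subset.1
  exact hp (hA.out hy hx ⟨not_lt.1 hyp, not_lt.1 hpx⟩)

theorem exists_third_subset_or_disjoint {A : Set ℝ} (hA : A.OrdConnected) {L : ℝ} (hL : 0 ≤ L)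
    (a : ℝ) : ∃ b, Icc b (b + L / 3) ⊆ Icc a (a + L) ∧
      (Icc b (b + L / 3) ⊆ A ∨ Disjoint (Icc b (b + L / 3)) A) := by
  by_cases hmid : Icc (a + L / 3) (a + L / 3 + L / 3) ⊆ A
  · exact ⟨a + L / 3, Icc_subset_Icc (by linarith) (by linarith), .inl hmid⟩
  · obtain ⟨p, hp, hpA⟩ := not_subset.1 hmid
    rcases subset_Iio_or_subset_Ioi_of_notMem hA hpA with hlt | hgt
    · refine ⟨a + L / 3 + L / 3, Icc_subset_Icc (by linarith) (by linarith), .inr ?_⟩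
      exact disjoint_left.2 fun t ht htA => (hlt htA).not_ge (hp.2.trans ht.1)
    · refine ⟨a, Icc_subset_Icc_right (by linarith), .inr ?_⟩
      exact disjoint_left.2 fun t ht htA => (hgt htA).not_ge (ht.2.trans hp.1)

theorem ordConnected_preimage_add_smul {E : Type*} [AddCommGroup E] [Module ℝ E] {P : Set E}
    (hP : Convex ℝ P) (x v : E) : ((fun t : ℝ => x + t • v) ⁻¹' P).OrdConnected := by
  have hconv := (hP.affine_preimage (AffineMap.lineMap x (x + v) : ℝ →ᵃ[ℝ] E)).ordConnected
  simpa only [preimage, AffineMap.lineMap_apply, vsub_eq_sub, vadd_eq_add, add_sub_cancel_left,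
    add_comm _ x] using hconv

section TorusFlow

variable {ι : Type*} (s α : ι → ℝ) {P : Set (ι → ℝ)}

/-- The linear flow on the torus starting at `s` with direction `α`, the torus being represented by
the cube `[0,1)^ι`. -/
noncomputable def torusFlow (t : ℝ) : ι → ℝ :=
  fun i => Int.fract (s i + t * α i)

variable {s α} in
theorem torusFlow_eq_of_floor_eq {t : ℝ} {n : ι → ℤ} (h : (fun i => ⌊s i + t * α i⌋) = n) :
    torusFlow s α t = (fun i => s i - n i) + t • α := by
  subst h
  funext i
  simp only [torusFlow, Int.fract, Pi.add_apply, Pi.smul_apply, smul_eq_mul]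
  ring

variable [Finite ι]

theorem hasPlateaus_torusFlow_mem (hP : Convex ℝ P) :
    HasPlateaus fun t => torusFlow s α t ∈ P := by
  intro L hL
  obtain ⟨M, hM, hfloor⟩ := HasPlateaus.pi (fun i => hasPlateaus_floor_add_mul (s i) (α i)) L hL
  refine ⟨M / 3, by positivity, fun a => ?_⟩
  obtain ⟨b, hb, hconst⟩ := hfloor a
  let n : ι → ℤ := fun i => ⌊s i + b * α i⌋
  let line : ℝ → ι → ℝ := fun t => (fun i => s i - n i) + t • α
  have hmem : ∀ t ∈ Icc b (b + M), (torusFlow s α t ∈ P ↔ t ∈ line ⁻¹' P) := fun t ht => by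
    rw [torusFlow_eq_of_floor_eq (hconst t ht b (left_mem_Icc.2 (by linarith))), mem_preimage]
  have hline : (line ⁻¹' P).OrdConnected := ordConnected_preimage_add_smul hP _ α
  obtain ⟨c, hc, hcA⟩ := exists_third_subset_or_disjoint hline hM.le b
  refine ⟨c, hc.trans hb, fun t ht u hu => propext ?_⟩
  refine (hmem t (hc ht)).trans (Iff.trans ?_ (hmem u (hc hu)).symm)
  rcases hcA with hin | hout
  · exact iff_of_true (hin ht) (hin hu)
  · exact iff_of_false (disjoint_left.1 hout ht) (disjoint_left.1 hout hu)

/-- While the floor vector stays fixed, the visits to `P` form an interval, and there are only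
countably many floor vectors. -/
theorem measurableSet_preimage_torusFlow (hP : Convex ℝ P) :
    MeasurableSet (torusFlow s α ⁻¹' P) := by
  have hfloor : Measurable fun (t : ℝ) i => ⌊s i + t * α i⌋ :=
    measurable_pi_lambda _ fun i => Int.measurable_floor.comp (by fun_prop)
  have hunion : torusFlow s α ⁻¹' P =
      ⋃ n : ι → ℤ, (fun (t : ℝ) i => ⌊s i + t * α i⌋) ⁻¹' {n} ∩
        (fun t => (fun i => s i - n i) + t • α) ⁻¹' P := by
    ext t
    simp only [mem_iUnion, mem_inter_iff, mem_preimage, mem_singleton_iff, exists_eq_left',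
      torusFlow_eq_of_floor_eq (rfl : (fun i => ⌊s i + t * α i⌋) = _)]
  rw [hunion]
  exact .iUnion fun n => (hfloor (measurableSet_singleton n)).inter
    (ordConnected_preimage_add_smul hP _ α).measurableSet

theorem intervalIntegrable_indicator_torusFlow (hP : Convex ℝ P) (a b : ℝ) :
    IntervalIntegrable (fun t => P.indicator (fun _ => (1 : ℝ)) (torusFlow s α t)) volume a b := by
  have hmeas : Measurable ((torusFlow s α ⁻¹' P).indicator fun _ => (1 : ℝ)) :=
    measurable_const.indicator (measurableSet_preimage_torusFlow s α hP)
  exact (intervalIntegrable_const (c := (1 : ℝ))).mono_fun hmeas.aestronglyMeasurable <|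
    .of_forall fun t => norm_indicator_le_norm_self (fun _ => (1 : ℝ)) _

end TorusFlow

section Discrepancy

variable {d : ℕ} {s α : Fin d → ℝ} {P : Set (Fin d → ℝ)} {a b : ℝ}

variable (s α a b) in
theorem Delta_sub_Delta (hP : Convex ℝ P) :
    Delta s α P b - Delta s α P a =
      (∫ t in a..b, P.indicator (fun _ => (1 : ℝ)) (torusFlow s α t))
        - (b - a) * (volume P).toReal := by
  have hDelta : ∀ T, Delta s α P T =
      (∫ t in 0..T, P.indicator (fun _ => (1 : ℝ)) (torusFlow s α t))
        - T * (volume P).toReal := fun _ => rfl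
  rw [hDelta, hDelta, ← intervalIntegral.integral_interval_sub_left
    (intervalIntegrable_indicator_torusFlow s α hP 0 b)
    (intervalIntegrable_indicator_torusFlow s α hP 0 a)]
  ring

theorem Delta_sub_Delta_of_forall_mem (hP : Convex ℝ P)
    (h : ∀ t ∈ uIcc a b, torusFlow s α t ∈ P) :
    Delta s α P b - Delta s α P a = (b - a) * (1 - (volume P).toReal) := by
  rw [Delta_sub_Delta s α a b hP, intervalIntegral.integral_congr (g := fun _ => (1 : ℝ))
    fun t ht => indicator_of_mem (h t ht) _, intervalIntegral.integral_const, smul_eq_mul]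
  ring

theorem Delta_sub_Delta_of_forall_notMem (hP : Convex ℝ P)
    (h : ∀ t ∈ uIcc a b, torusFlow s α t ∉ P) :
    Delta s α P b - Delta s α P a = -((b - a) * (volume P).toReal) := by
  rw [Delta_sub_Delta s α a b hP, intervalIntegral.integral_congr (g := fun _ => (0 : ℝ))
    fun t ht => indicator_of_notMem (h t ht) _, intervalIntegral.integral_const, smul_zero]
  ring

theorem mul_min_le_abs_Delta_sub_Delta (hP : Convex ℝ P) (hab : a ≤ b)
    (h : ∀ t ∈ Icc a b, ∀ u ∈ Icc a b, (torusFlow s α t ∈ P) = (torusFlow s α u ∈ P)) :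
    (b - a) * min (volume P).toReal (1 - (volume P).toReal) ≤
      |Delta s α P b - Delta s α P a| := by
  have hlen : 0 ≤ b - a := sub_nonneg.2 hab
  have ha : a ∈ Icc a b := left_mem_Icc.2 hab
  rw [← uIcc_of_le hab] at h ha
  by_cases hin : torusFlow s α a ∈ P
  · rw [Delta_sub_Delta_of_forall_mem hP fun t ht => h a ha t ht ▸ hin]
    exact (mul_le_mul_of_nonneg_left (min_le_right _ _) hlen).trans (le_abs_self _)
  · rw [Delta_sub_Delta_of_forall_notMem hP fun t ht => h a ha t ht ▸ hin, abs_neg]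
    exact (mul_le_mul_of_nonneg_left (min_le_left _ _) hlen).trans (le_abs_self _)

end Discrepancy

theorem frequently_half_le_abs_of_le_abs_sub {F : ℝ → ℝ} {ℓ c : ℝ} (hℓ : 0 ≤ ℓ)
    (h : ∀ a, ∃ b ≥ a, c ≤ |F (b + ℓ) - F b|) : ∃ᶠ T in Filter.atTop, c / 2 ≤ |F T| := by
  refine Filter.frequently_atTop.2 fun a => ?_
  obtain ⟨b, hb, hjump⟩ := h a
  have htri := abs_sub (F (b + ℓ)) (F b)
  rcases le_total (c / 2) |F b| with hlarge | hsmall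
  · exact ⟨b, hb, hlarge⟩
  · exact ⟨b + ℓ, by linarith, by linarith⟩

theorem delta_omega_one_general {d : ℕ} (s α : Fin d → ℝ) {P : Set (Fin d → ℝ)}
    (hP : Convex ℝ P) (h0 : 0 < (volume P).toReal) (h1 : (volume P).toReal < 1) :
    ∃ c > 0, ∃ᶠ T : ℝ in Filter.atTop, c ≤ |Delta s α P T| := by
  obtain ⟨ℓ, hℓ, hplateau⟩ := (hasPlateaus_torusFlow_mem s α hP).exists_ge
  have : 0 < min (volume P).toReal (1 - (volume P).toReal) := lt_min h0 (sub_pos.2 h1)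
  refine ⟨ℓ * min (volume P).toReal (1 - (volume P).toReal) / 2, by positivity,
    frequently_half_le_abs_of_le_abs_sub hℓ.le fun a => ?_⟩
  obtain ⟨b, hb, hconst⟩ := hplateau a
  refine ⟨b, hb, ?_⟩
  simpa only [add_sub_cancel_left] using
    mul_min_le_abs_Delta_sub_Delta hP (le_add_of_nonneg_right hℓ.le) hconst

end

/-- For any polytope `P ⊆ [0,1]^d` with `0 < λ(P) < 1`, we have `Δ_T(s,α,P) = Ω(1)`:
there is `c > 0` with `|Δ_T(s,α,P)| ≥ c` for arbitrarily large `T`. -/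
theorem delta_omega_one
    {d : ℕ} (hd : 1 ≤ d) (α : Fin d → ℝ)
    (s : Fin d → ℝ) (hs : s ∈ Set.Icc (0 : Fin d → ℝ) 1)
    (P : Set (Fin d → ℝ)) (hpoly : IsPolytope P) (hsub : P ⊆ Set.Icc 0 1)
    (h0 : 0 < (volume P).toReal) (h1 : (volume P).toReal < 1) :
    ∃ c > 0, ∃ᶠ T : ℝ in Filter.atTop, c ≤ |Delta s α P T| := by
  obtain ⟨V, rfl⟩ := hpoly
  exact delta_omega_one_general s α (convex_convexHull ℝ (V : Set (Fin d → ℝ))) h0 h1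
end
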